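/- Let K = {x ∈ ℝ^n : ‖x‖_p ≤ 1} and L = {x ∈ ℝ^n : ‖x‖_q ≤ 1} with 1 ≤ p < 2 < q ≤ ∞. Then d(K,L) ≥ max{ A_p · n^{1/2 − 1/q}, A_{q*} · n^{1/p − 1/2} }, where q* is the Hölder conjugate of q, and A_r = min{1, 2^{1/2 − 1/r}, 2^{1/2}(Γ((r+1)/2)/√π)^{1/r}} is the optimal lower Khintchine constant. -/

import Mathlib

open Pointwise
open scoped ENNReal

/-- The multiplicative Banach–Mazur distance between two subsets of `ℝ^n`. -/
noncomputable def bmDist (n : ℕ) (K L : Set (Fin n → ℝ)) : ℝ :=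
  sInf {r : ℝ | 1 ≤ r ∧ ∃ T : (Fin n → ℝ) ≃ₗ[ℝ] (Fin n → ℝ), L ⊆ T '' K ∧ T '' K ⊆ r • L}

/-- The optimal lower Khintchine constant `A_r`. -/
noncomputable def khintchineA (r : ℝ) : ℝ :=
  min (min 1 (2 ^ ((1 : ℝ) / 2 - 1 / r)))
    (2 ^ ((1 : ℝ) / 2) * (Real.Gamma ((r + 1) / 2) / Real.sqrt Real.pi) ^ (1 / r))

section Helpers

open MeasureTheory Set

noncomputable def sg (b : Bool) : ℝ := if b then 1 else -1

noncomputable def kE (n : ℕ) (a : Fin n → ℝ) (p : ℝ) : ℝ :=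
  (∑ ε : Fin n → Bool, |∑ j, a j * sg (ε j)| ^ p) / 2 ^ n

lemma integ_aux (p : ℝ) (hp0 : 0 < p) (hp2 : p < 2) (φ : ℝ → ℝ) (hφ : Continuous φ) (C : ℝ)
    (h1 : ∀ u, |1 - φ u| ≤ C * u ^ 2) (h2 : ∀ u, |1 - φ u| ≤ 2) :
    IntegrableOn (fun u => (1 - φ u) * u ^ (-p - 1)) (Ioi (0:ℝ)) := by
  have hm : AEStronglyMeasurable (fun u => (1 - φ u) * u ^ (-p - 1)) volume := by
    have : Measurable (fun u : ℝ => (1 - φ u) * u ^ (-p - 1)) := by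
      have := hφ.measurable
      fun_prop
    exact this.aestronglyMeasurable
  rw [← Ioc_union_Ioi_eq_Ioi (zero_le_one (α := ℝ))]
  apply IntegrableOn.union
  · have hi : IntegrableOn (fun u : ℝ => C * u ^ (1 - p)) (Ioc 0 1) := by
      apply Integrable.const_mul
      have := (intervalIntegral.intervalIntegrable_rpow' (a := 0) (b := 1) (r := 1 - p) (by linarith))
      rwa [intervalIntegrable_iff_integrableOn_Ioc_of_le zero_le_one] at this
    refine Integrable.mono' hi hm.restrict ?_
    filter_upwards [ae_restrict_mem measurableSet_Ioc] with u hu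
    rw [Real.norm_eq_abs, abs_mul, abs_of_pos (Real.rpow_pos_of_pos hu.1 _)]
    calc _ ≤ C * u ^ 2 * u ^ (-p-1) := by
          gcongr
          · exact (Real.rpow_pos_of_pos hu.1 _).le
          · exact h1 u
      _ = _ := by
          rw [mul_assoc, ← Real.rpow_natCast, ← Real.rpow_add hu.1]
          congr 2; push_cast; ring
  · have hi : IntegrableOn (fun u : ℝ => 2 * u ^ (-p - 1)) (Ioi 1) := by
      apply Integrable.const_mul
      exact integrableOn_Ioi_rpow_of_lt (by linarith) one_pos
    refine Integrable.mono' hi hm.restrict ?_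
    filter_upwards [ae_restrict_mem measurableSet_Ioi] with u hu
    have hu0 : (0:ℝ) < u := lt_trans one_pos hu
    rw [Real.norm_eq_abs, abs_mul, abs_of_pos (Real.rpow_pos_of_pos hu0 _)]
    gcongr
    exact h2 u

noncomputable def kap (p : ℝ) : ℝ := ∫ u in Ioi (0:ℝ), (1 - Real.cos u) * u ^ (-p - 1)

lemma cos_bd (x u : ℝ) : |1 - Real.cos (x * u)| ≤ (x ^ 2 / 2) * u ^ 2 := by
  rw [abs_of_nonneg (by linarith [Real.cos_le_one (x * u)])]
  have := Real.one_sub_sq_div_two_le_cos (x := x * u)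
  nlinarith

lemma cos_bd2 (x : ℝ) : |1 - Real.cos x| ≤ 2 := by
  rw [abs_le]; constructor <;> linarith [Real.cos_le_one x, Real.neg_one_le_cos x]

lemma integ_cos (p : ℝ) (hp0 : 0 < p) (hp2 : p < 2) (x : ℝ) :
    IntegrableOn (fun u => (1 - Real.cos (x * u)) * u ^ (-p - 1)) (Ioi (0:ℝ)) :=
  integ_aux p hp0 hp2 _ (by fun_prop) _ (cos_bd x) (fun _ => cos_bd2 _)

lemma int_cos (p : ℝ) (hp0 : 0 < p) (x : ℝ) :
    ∫ u in Ioi (0:ℝ), (1 - Real.cos (x * u)) * u ^ (-p - 1) = |x| ^ p * kap p := by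
  wlog hx : 0 ≤ x with H
  · have := H p hp0 (-x) (by linarith)
    simpa [Real.cos_neg] using this
  rcases hx.eq_or_lt with rfl | hx
  · simp [Real.zero_rpow hp0.ne']
  rw [abs_of_pos hx, kap]
  have h := integral_comp_mul_left_Ioi (fun u => (1 - Real.cos u) * u ^ (-p - 1)) 0 hx
  simp only [mul_zero, smul_eq_mul] at h
  have h2 : ∫ u in Ioi (0:ℝ), (1 - Real.cos (x * u)) * (x * u) ^ (-p - 1)
      = x ^ (-p - 1) * ∫ u in Ioi (0:ℝ), (1 - Real.cos (x * u)) * u ^ (-p - 1) := by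
    rw [← integral_const_mul]
    apply setIntegral_congr_fun measurableSet_Ioi
    intro u hu
    simp only
    rw [Real.mul_rpow hx.le (le_of_lt hu)]; ring
  rw [h2] at h
  have h3 : x ^ p * x⁻¹ = (x ^ (-p-1))⁻¹ * 1 * (x ^ (-1 : ℝ)) * x ^ (-1:ℝ) := by
    rw [← Real.rpow_neg hx.le, mul_one, ← Real.rpow_add hx, ← Real.rpow_add hx, ← Real.rpow_neg_one,
      ← Real.rpow_add hx]; congr 1; ring
  have h4 : x ^ (-p-1) * x ^ p = x⁻¹ := by
    rw [← Real.rpow_add hx, ← Real.rpow_neg_one]; congr 1; ring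
  have h5 : x ^ (-p-1) ≠ 0 := (Real.rpow_pos_of_pos hx _).ne'
  apply mul_left_cancel₀ h5
  rw [h, ← mul_assoc, h4]

lemma kap_pos (p : ℝ) (hp0 : 0 < p) (hp2 : p < 2) : 0 < kap p := by
  have hIntg := integ_cos p hp0 hp2 1
  simp only [one_mul] at hIntg
  have hnn : ∀ u ∈ Ioi (0:ℝ), 0 ≤ (1 - Real.cos u) * u ^ (-p - 1) := fun u hu =>
    mul_nonneg (by linarith [Real.cos_le_one u]) (Real.rpow_nonneg (le_of_lt hu) _)
  have hsub : Ioc (1:ℝ) 2 ⊆ Ioi 0 := fun u hu => lt_trans one_pos hu.1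
  have h1 : ∫ u in Ioc (1:ℝ) 2, (1 - Real.cos 1) * 2 ^ (-p - 1) ≤ kap p := by
    refine le_trans ?_ (setIntegral_mono_set hIntg
      (by filter_upwards [ae_restrict_mem measurableSet_Ioi] with u hu using hnn u hu)
      (LE.le.eventuallyLE hsub))
    apply setIntegral_mono_on _ (hIntg.mono_set hsub) measurableSet_Ioc
    · intro u hu
      have : Real.cos u ≤ Real.cos 1 := Real.cos_le_cos_of_nonneg_of_le_pi (by norm_num)
        (by linarith [hu.2, Real.pi_gt_three]) hu.1.le
      have h3 : (2:ℝ) ^ (-p - 1) ≤ u ^ (-p - 1) :=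
        Real.rpow_le_rpow_of_nonpos (by linarith [hu.1]) hu.2 (by linarith)
      have := Real.cos_le_one 1
      have := Real.cos_le_one u
      gcongr
    · exact integrableOn_const (by simp)
  refine lt_of_lt_of_le ?_ h1
  simp only [integral_const, smul_eq_mul]
  have : Real.cos 1 < 1 := by have := Real.cos_one_le; norm_num at this; linarith
  have : (0:ℝ) < 2 ^ (-p-1) := by positivity
  simp [Measure.real]
  norm_num
  exact mul_pos (by linarith) this


lemma sum_exp_signs (n : ℕ) (a : Fin n → ℝ) (u : ℝ) :
    (∑ ε : Fin n → Bool, Real.cos ((∑ j, a j * sg (ε j)) * u)) = 2 ^ n * ∏ j, Real.cos (a j * u) := by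
  have h1 : ∏ j : Fin n, ∑ b : Bool, Complex.exp (((a j * sg b * u : ℝ) : ℂ) * Complex.I)
      = ∑ ε : Fin n → Bool, ∏ j, Complex.exp (((a j * sg (ε j) * u : ℝ) : ℂ) * Complex.I) := by
    rw [Finset.prod_univ_sum, Fintype.piFinset_univ]
  have h2 : ∀ j : Fin n, ∑ b : Bool, Complex.exp (((a j * sg b * u : ℝ) : ℂ) * Complex.I)
      = ((2 * Real.cos (a j * u) : ℝ) : ℂ) := by
    intro j
    rw [Fintype.sum_bool]
    simp only [sg, Complex.exp_mul_I]
    simp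
    ring
  have h3 : ∀ ε : Fin n → Bool, ∏ j, Complex.exp (((a j * sg (ε j) * u : ℝ) : ℂ) * Complex.I)
      = Complex.exp ((((∑ j, a j * sg (ε j)) * u : ℝ) : ℂ) * Complex.I) := by
    intro ε
    rw [← Complex.exp_sum]; congr 1
    push_cast; simp [Finset.sum_mul]
  simp only [h2, h3] at h1
  have h4 := congrArg Complex.re h1
  rw [← Complex.ofReal_prod, Complex.ofReal_re, Complex.re_sum] at h4
  simp only [Complex.exp_ofReal_mul_I_re] at h4
  rw [← h4, Finset.prod_mul_distrib]; simp

lemma kE_int (n : ℕ) (a : Fin n → ℝ) (p : ℝ) (hp0 : 0 < p) (hp2 : p < 2) :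
    kE n a p * kap p = ∫ u in Ioi (0:ℝ), (1 - ∏ j, Real.cos (a j * u)) * u ^ (-p - 1) := by
  have h1 : ∀ u : ℝ, (1 - ∏ j, Real.cos (a j * u)) * u ^ (-p - 1) =
      (1 / 2 ^ n) * ∑ ε : Fin n → Bool, (1 - Real.cos ((∑ j, a j * sg (ε j)) * u)) * u ^ (-p - 1) := by
    intro u
    rw [← Finset.sum_mul, Finset.sum_sub_distrib, sum_exp_signs]
    generalize ∏ j, Real.cos (a j * u) = P
    simp
    field_simp
  simp only [h1]
  rw [integral_const_mul, integral_finsetSum _ (fun ε _ => integ_cos p hp0 hp2 _)]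
  simp only [int_cos p hp0]
  rw [← Finset.sum_mul, kE]; ring

lemma kE_integ (n : ℕ) (a : Fin n → ℝ) (p : ℝ) (hp0 : 0 < p) (hp2 : p < 2) :
    IntegrableOn (fun u => (1 - ∏ j, Real.cos (a j * u)) * u ^ (-p - 1)) (Ioi (0:ℝ)) := by
  have h1 : ∀ u : ℝ, (1 - ∏ j, Real.cos (a j * u)) * u ^ (-p - 1) =
      (1 / 2 ^ n) * ∑ ε : Fin n → Bool, (1 - Real.cos ((∑ j, a j * sg (ε j)) * u)) * u ^ (-p - 1) := by
    intro u
    rw [← Finset.sum_mul, Finset.sum_sub_distrib, sum_exp_signs]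
    generalize ∏ j, Real.cos (a j * u) = P
    simp
    field_simp
  simp only [h1]
  exact Integrable.const_mul (integrable_finsetSum _ (fun ε _ => integ_cos p hp0 hp2 _)) _

noncomputable def Jn (n : ℕ) (p : ℝ) : ℝ := ∫ u in Ioi (0:ℝ), (1 - |Real.cos u| ^ n) * u ^ (-p - 1)

lemma abs_cos_le (u : ℝ) : |Real.cos u| ≤ 1 := Real.abs_cos_le_one u

lemma cospow_bd (n : ℕ) (x u : ℝ) : |1 - |Real.cos (x * u)| ^ n| ≤ (n * (x ^ 2 / 2)) * u ^ 2 := by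
  have h0 : |Real.cos (x * u)| ^ n ≤ 1 := pow_le_one₀ (abs_nonneg _) (abs_cos_le _)
  rw [abs_of_nonneg (by linarith)]
  have h1 := one_add_mul_le_pow (a := |Real.cos (x*u)| - 1) (by linarith [abs_nonneg (Real.cos (x*u))]) n
  have h2 := Real.one_sub_sq_div_two_le_cos (x := x * u)
  have h3 := le_abs_self (Real.cos (x*u))
  have hn : (0:ℝ) ≤ n := Nat.cast_nonneg n
  have h4 : (n:ℝ) * (1 - |Real.cos (x*u)|) ≤ n * ((x*u)^2/2) := by gcongr; linarith
  have h5 : 1 + (|Real.cos (x*u)| - 1) = |Real.cos (x*u)| := by ring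
  rw [h5] at h1
  nlinarith

lemma cospow_bd2 (n : ℕ) (u : ℝ) : |1 - |Real.cos u| ^ n| ≤ 2 := by
  have h0 : |Real.cos u| ^ n ≤ 1 := pow_le_one₀ (abs_nonneg _) (abs_cos_le _)
  have h1 : 0 ≤ |Real.cos u| ^ n := by positivity
  rw [abs_le]; constructor <;> linarith

lemma Jn_integ' (n : ℕ) (p : ℝ) (hp0 : 0 < p) (hp2 : p < 2) (x : ℝ) :
    IntegrableOn (fun u => (1 - |Real.cos (x * u)| ^ n) * u ^ (-p - 1)) (Ioi (0:ℝ)) :=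
  integ_aux p hp0 hp2 (fun u => |Real.cos (x * u)| ^ n) (by fun_prop) _ (cospow_bd n x) (fun _ => cospow_bd2 _ _)

lemma Jn_integ (n : ℕ) (p : ℝ) (hp0 : 0 < p) (hp2 : p < 2) :
    IntegrableOn (fun u => (1 - |Real.cos u| ^ n) * u ^ (-p - 1)) (Ioi (0:ℝ)) := by
  simpa using Jn_integ' n p hp0 hp2 1

lemma Jn_scale (n : ℕ) (hn : n ≠ 0) (p : ℝ) (hp0 : 0 < p) (x : ℝ) :
    ∫ u in Ioi (0:ℝ), (1 - |Real.cos (x * u)| ^ n) * u ^ (-p - 1) = |x| ^ p * Jn n p := by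
  wlog hx : 0 ≤ x with H
  · have := H n hn p hp0 (-x) (by linarith)
    simpa [Real.cos_neg] using this
  rcases hx.eq_or_lt with rfl | hx
  · simp [Real.zero_rpow hp0.ne']
  rw [abs_of_pos hx, Jn]
  have h := integral_comp_mul_left_Ioi (fun u => (1 - |Real.cos u| ^ n) * u ^ (-p - 1)) 0 hx
  simp only [mul_zero, smul_eq_mul] at h
  have h2 : ∫ u in Ioi (0:ℝ), (1 - |Real.cos (x * u)| ^ n) * (x * u) ^ (-p - 1)
      = x ^ (-p - 1) * ∫ u in Ioi (0:ℝ), (1 - |Real.cos (x * u)| ^ n) * u ^ (-p - 1) := by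
    rw [← integral_const_mul]
    apply setIntegral_congr_fun measurableSet_Ioi
    intro u hu
    simp only
    rw [Real.mul_rpow hx.le (le_of_lt hu)]; ring
  rw [h2] at h
  have h4 : x ^ (-p-1) * x ^ p = x⁻¹ := by
    rw [← Real.rpow_add hx, ← Real.rpow_neg_one]; congr 1; ring
  have h5 : x ^ (-p-1) ≠ 0 := (Real.rpow_pos_of_pos hx _).ne'
  apply mul_left_cancel₀ h5
  rw [h, ← mul_assoc, h4]

lemma prod_le_avg (n : ℕ) (hn : 0 < n) (c : Fin n → ℝ) (hc : ∀ j, 0 ≤ c j) :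
    ∏ j, c j ≤ (1 / n) * ∑ j, c j ^ n := by
  have hn' : (n:ℝ) ≠ 0 := by positivity
  have h := Real.geom_mean_le_arith_mean_weighted Finset.univ (fun _ : Fin n => (1 / n : ℝ))
    (fun j => c j ^ n) (fun _ _ => by positivity) (by simp; field_simp) (fun j _ => by have := hc j; positivity)
  rw [← Finset.mul_sum] at h
  refine le_trans (le_of_eq ?_) h
  apply Finset.prod_congr rfl
  intro j _
  rw [← Real.rpow_natCast, ← Real.rpow_mul (hc j)]
  field_simp; simp

lemma kE_ge (n : ℕ) (hn : 0 < n) (a : Fin n → ℝ) (p : ℝ) (hp0 : 0 < p) (hp2 : p < 2) :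
    (1 / n) * (∑ j, |a j| ^ p) * Jn n p ≤ kE n a p * kap p := by
  rw [kE_int n a p hp0 hp2]
  have h1 : (1 / n) * (∑ j, |a j| ^ p) * Jn n p =
      ∫ u in Ioi (0:ℝ), (1 / n : ℝ) * ∑ j, (1 - |Real.cos (a j * u)| ^ n) * u ^ (-p - 1) := by
    rw [integral_const_mul, integral_finsetSum _ (fun j _ => Jn_integ' n p hp0 hp2 _)]
    simp only [Jn_scale n hn.ne' p hp0]
    rw [← Finset.sum_mul]; ring
  rw [h1]
  apply setIntegral_mono_on _ (kE_integ n a p hp0 hp2) measurableSet_Ioi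
  · intro u hu
    have hk : 0 ≤ u ^ (-p-1) := Real.rpow_nonneg (le_of_lt hu) _
    rw [← Finset.sum_mul, ← mul_assoc]
    gcongr
    have h2 := prod_le_avg n hn (fun j => |Real.cos (a j * u)|) (fun _ => abs_nonneg _)
    have h3 : ∏ j, Real.cos (a j * u) ≤ ∏ j, |Real.cos (a j * u)| := by
      rw [← Finset.abs_prod]; exact le_abs_self _
    rw [Finset.sum_sub_distrib, mul_sub]
    have hn' : (n:ℝ) ≠ 0 := by positivity
    have h4 : (1 / n : ℝ) * ∑ j : Fin n, (1:ℝ) = 1 := by simp [hn']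
    rw [h4]; linarith
  · exact Integrable.const_mul (integrable_finsetSum _ (fun j _ => Jn_integ' n p hp0 hp2 _)) _

lemma Jn_even (n : ℕ) (hn : Even n) (p : ℝ) (hp0 : 0 < p) (hp2 : p < 2) :
    Jn n p = kE n (fun _ => 1) p * kap p := by
  rw [kE_int n _ p hp0 hp2, Jn]
  simp [hn.pow_abs]

lemma Jn_mid (n m1 m2 : ℕ) (h : m1 + m2 = 2 * n) (p : ℝ) (hp0 : 0 < p) (hp2 : p < 2) :
    (Jn m1 p + Jn m2 p) / 2 ≤ Jn n p := by
  have : (Jn m1 p + Jn m2 p) / 2 = ∫ u in Ioi (0:ℝ), (1/2:ℝ) * ((1 - |Real.cos u| ^ m1) * u ^ (-p - 1) + (1 - |Real.cos u| ^ m2) * u ^ (-p - 1)) := by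
    rw [integral_const_mul, integral_add (Jn_integ m1 p hp0 hp2) (Jn_integ m2 p hp0 hp2), Jn, Jn]; ring
  rw [this, Jn]
  apply setIntegral_mono_on _ (Jn_integ n p hp0 hp2) measurableSet_Ioi
  · intro u hu
    have hk : 0 ≤ u ^ (-p-1) := Real.rpow_nonneg (le_of_lt hu) _
    rw [← add_mul, ← mul_assoc]
    gcongr
    set c := |Real.cos u| with hc
    have hc0 : 0 ≤ c := abs_nonneg _
    have key : c ^ n ≤ (c ^ m1 + c ^ m2) / 2 := by
      have h1 : c ^ m1 * c ^ m2 = (c ^ n) ^ 2 := by rw [← pow_add, h, mul_comm, pow_mul]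
      have h2 : 0 ≤ c ^ m1 := by positivity
      have h3 : 0 ≤ c ^ m2 := by positivity
      apply le_of_sq_le_sq _ (by positivity)
      nlinarith [sq_nonneg (c ^ m1 - c ^ m2)]
    linarith
  · exact Integrable.const_mul ((Jn_integ m1 p hp0 hp2).add (Jn_integ m2 p hp0 hp2)) _

lemma Jn_two (p : ℝ) (hp0 : 0 < p) : Jn 2 p = 2 ^ p / 2 * kap p := by
  have h := int_cos p hp0 2
  rw [abs_of_pos (by norm_num)] at h
  have : ∀ u : ℝ, (1 - |Real.cos u| ^ 2) * u ^ (-p - 1) = (1/2:ℝ) * ((1 - Real.cos (2 * u)) * u ^ (-p-1)) := by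
    intro u; rw [sq_abs, Real.cos_two_mul]; ring
  simp only [Jn, this]
  rw [integral_const_mul, h]; ring

lemma Jn_four (p : ℝ) (hp0 : 0 < p) (hp2 : p < 2) : Jn 4 p = (2 ^ p / 2 + 4 ^ p / 8) * kap p := by
  have h := int_cos p hp0 2
  have h' := int_cos p hp0 4
  rw [abs_of_pos (by norm_num)] at h h'
  have : ∀ u : ℝ, (1 - |Real.cos u| ^ 4) * u ^ (-p - 1) = (1/2:ℝ) * ((1 - Real.cos (2 * u)) * u ^ (-p-1)) + (1/8:ℝ) * ((1 - Real.cos (4 * u)) * u ^ (-p-1)) := by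
    intro u
    have e : Real.cos (4 * u) = 2 * Real.cos (2 * u) ^ 2 - 1 := by
      rw [← Real.cos_two_mul]; ring_nf
    rw [(by decide : Even 4).pow_abs, e, Real.cos_two_mul]; ring
  simp only [Jn, this]
  rw [integral_add ((integ_cos p hp0 hp2 2).const_mul _) ((integ_cos p hp0 hp2 4).const_mul _), integral_const_mul, integral_const_mul, h, h']; ring


noncomputable def gam (p : ℝ) : ℝ := 2 ^ (p / 2) * (Real.Gamma ((p + 1) / 2) / Real.sqrt Real.pi)

lemma gauss_cos (t : ℝ) : ∫ x : ℝ, Real.cos (t * x) * Real.exp (-(1/2) * x ^ 2) =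
    Real.sqrt (2 * Real.pi) * Real.exp (-t ^ 2 / 2) := by
  have h := fourierIntegral_gaussian (b := ((1/2 : ℝ) : ℂ)) (by norm_num) (t : ℂ)
  have h2 : ∀ x : ℝ, Complex.exp (Complex.I * t * ↑x) * Complex.exp (-((1/2:ℝ):ℂ) * ↑x ^ 2)
      = Complex.exp (((t * x : ℝ) : ℂ) * Complex.I) * ((Real.exp (-(1/2) * x ^ 2) : ℝ) : ℂ) := by
    intro x
    push_cast
    congr 1
    congr 1
    ring
  have h3 : ((Real.pi : ℂ) / ((1/2 : ℝ) : ℂ)) ^ (1 / 2 : ℂ) * Complex.exp (-(t:ℂ) ^ 2 / (4 * ((1/2 : ℝ) : ℂ)))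
      = ((Real.sqrt (2 * Real.pi) * Real.exp (-t ^ 2 / 2) : ℝ) : ℂ) := by
    rw [Real.sqrt_eq_rpow]
    rw [Complex.ofReal_mul, Complex.ofReal_cpow (by positivity)]
    push_cast
    congr 1
    · congr 1; ring
    · congr 1; ring
  rw [h3] at h
  simp only [h2] at h
  have h4 := congrArg Complex.re h
  rw [Complex.ofReal_re] at h4
  rw [← h4]
  have hIntg : Integrable (fun x : ℝ => Complex.exp (((t * x : ℝ) : ℂ) * Complex.I) * ((Real.exp (-(1/2) * x ^ 2) : ℝ) : ℂ)) := by
    have hi := (integrable_exp_neg_mul_sq (b := 1/2) (by norm_num)).ofReal (𝕜 := ℂ)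
    refine hi.bdd_mul (c := 1) (by fun_prop) ?_
    filter_upwards with x
    rw [Complex.norm_exp_ofReal_mul_I]
  have h5 := (integral_re hIntg)
  simp only [RCLike.re_to_complex] at h5
  rw [← h5]
  congr 1
  ext x
  rw [Complex.re_mul_ofReal, Complex.exp_ofReal_mul_I_re]

lemma gauss_abs (p : ℝ) (hp0 : 0 < p) : ∫ x : ℝ, |x| ^ p * Real.exp (-(1/2) * x ^ 2) = 
    Real.sqrt (2 * Real.pi) * gam p := by
  have h := integral_comp_abs (f := fun x : ℝ => x ^ p * Real.exp (-(1/2) * x ^ 2)) 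
  simp only [sq_abs] at h
  rw [h]
  have h2 := integral_rpow_mul_exp_neg_mul_rpow (p := 2) (q := p) (b := 1/2) (by norm_num) (by linarith) (by norm_num)
  simp only [Real.rpow_two] at h2
  rw [h2, gam, Real.sqrt_mul (by norm_num)]
  have h3 : (1/2 : ℝ) ^ (-(p+1)/2) = Real.sqrt 2 * 2 ^ (p/2) := by
    rw [one_div, Real.inv_rpow (by norm_num), ← Real.rpow_neg (by norm_num), Real.sqrt_eq_rpow, ← Real.rpow_add (by norm_num)]
    congr 1; ring
  rw [h3]
  have : Real.sqrt Real.pi ≠ 0 := by positivity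
  field_simp

lemma gam_pos (p : ℝ) (hp0 : 0 < p) : 0 < gam p := by
  have : 0 < Real.Gamma ((p + 1) / 2) := Real.Gamma_pos_of_pos (by linarith)
  unfold gam; positivity

lemma gauss_abs_integ (p : ℝ) (hp0 : 0 < p) : Integrable (fun x : ℝ => |x| ^ p * Real.exp (-(1/2) * x ^ 2)) := by
  by_contra h
  have h1 := integral_undef h
  rw [gauss_abs p hp0] at h1
  have := gam_pos p hp0
  have : 0 < Real.sqrt (2 * Real.pi) * gam p := by positivity
  linarith

lemma gauss_id (p : ℝ) (hp0 : 0 < p) (hp2 : p < 2) (s : ℝ) (hs : 0 < s) :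
    ∫ u in Ioi (0:ℝ), (1 - Real.exp (-(s * u) ^ 2 / 2)) * u ^ (-p - 1) = s ^ p * gam p * kap p := by
  set f : ℝ → ℝ → ℝ := fun x u => Real.exp (-(1/2) * x ^ 2) * ((1 - Real.cos ((s * x) * u)) * u ^ (-p-1)) with hf
  have hf1 : ∀ x, IntegrableOn (f x) (Ioi 0) := fun x => (integ_cos p hp0 hp2 (s * x)).const_mul _
  have hf2 : ∀ x, ∫ u in Ioi (0:ℝ), f x u = (s ^ p * kap p) * (|x| ^ p * Real.exp (-(1/2) * x ^ 2)) := by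
    intro x
    simp only [hf]
    rw [integral_const_mul, int_cos p hp0, abs_mul, Real.mul_rpow (abs_nonneg _) (abs_nonneg _), abs_of_pos hs]
    ring
  have hfn : ∀ x, ∀ u ∈ Ioi (0:ℝ), 0 ≤ f x u := fun x u hu =>
    mul_nonneg (Real.exp_pos _).le (mul_nonneg (by linarith [Real.cos_le_one (s*x*u)]) (Real.rpow_nonneg (le_of_lt hu) _))
  have hI : Integrable (Function.uncurry f) (volume.prod (volume.restrict (Ioi 0))) := by
    rw [integrable_prod_iff]
    · refine ⟨Filter.Eventually.of_forall hf1, ?_⟩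
      have : (fun x => ∫ u in Ioi (0:ℝ), ‖Function.uncurry f (x, u)‖) = fun x => (s ^ p * kap p) * (|x| ^ p * Real.exp (-(1/2) * x ^ 2)) := by
        ext x
        rw [← hf2]
        apply setIntegral_congr_fun measurableSet_Ioi
        intro u hu
        simp only [Function.uncurry, Real.norm_eq_abs]
        exact abs_of_nonneg (hfn x u hu)
      rw [this]
      exact (gauss_abs_integ p hp0).const_mul _
    · have : Measurable (Function.uncurry f) := by
        simp only [hf, Function.uncurry_def]; fun_prop
      exact this.aestronglyMeasurable
  have hsw := integral_integral_swap hI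
  simp only [hf2] at hsw
  rw [integral_const_mul, gauss_abs p hp0] at hsw
  have h3 : ∀ u : ℝ, ∫ x : ℝ, f x u = Real.sqrt (2 * Real.pi) * ((1 - Real.exp (-(s * u) ^ 2 / 2)) * u ^ (-p - 1)) := by
    intro u
    have e : ∀ x, f x u = u ^ (-p-1) * (Real.exp (-(1/2) * x ^ 2) - Real.cos ((s * u) * x) * Real.exp (-(1/2) * x ^ 2)) := by
      intro x; simp only [hf]; rw [show s * u * x = s * x * u by ring]; ring
    simp only [e]
    rw [integral_const_mul, integral_sub, gauss_cos, integral_gaussian]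
    · rw [show Real.pi / (1/2) = 2 * Real.pi by ring]; ring
    · exact integrable_exp_neg_mul_sq (by norm_num)
    · refine (integrable_exp_neg_mul_sq (b := 1/2) (by norm_num)).bdd_mul (c := 1) (by fun_prop) ?_
      filter_upwards with x
      exact Real.abs_cos_le_one _
  simp only [h3] at hsw
  rw [integral_const_mul] at hsw
  have h0 : Real.sqrt (2 * Real.pi) ≠ 0 := by positivity
  apply mul_left_cancel₀ h0
  rw [← hsw]; ring

lemma gauss_integ (p : ℝ) (hp0 : 0 < p) (hp2 : p < 2) (s : ℝ) :
    IntegrableOn (fun u : ℝ => (1 - Real.exp (-(s * u) ^ 2 / 2)) * u ^ (-p - 1)) (Ioi (0:ℝ)) := by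
  refine integ_aux p hp0 hp2 (fun u => Real.exp (-(s * u) ^ 2 / 2)) (by fun_prop) (s ^ 2 / 2) ?_ ?_
  · intro u
    have h1 : Real.exp (-(s * u) ^ 2 / 2) ≤ 1 := Real.exp_le_one_iff.2 (by nlinarith [sq_nonneg (s * u)])
    rw [abs_of_nonneg (by linarith)]
    have := Real.add_one_le_exp (-(s * u) ^ 2 / 2)
    nlinarith
  · intro u
    have h1 : Real.exp (-(s * u) ^ 2 / 2) ≤ 1 := Real.exp_le_one_iff.2 (by nlinarith [sq_nonneg (s * u)])
    have h2 := Real.exp_pos (-(s * u) ^ 2 / 2)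
    rw [abs_le]; constructor <;> linarith


lemma tan_step (F f : ℝ → ℝ) (hF : ∀ x, HasDerivAt F (f x) x) (h0 : F 0 = 0)
    (h : ∀ x ∈ Ioo (0:ℝ) (Real.pi/2), f x ≤ 1 + Real.tan x ^ 2) :
    ∀ x ∈ Ico (0:ℝ) (Real.pi/2), F x ≤ Real.tan x := by
  have hd : ∀ x ∈ Ico (0:ℝ) (Real.pi/2), HasDerivAt (fun x => Real.tan x - F x) (1 / Real.cos x ^ 2 - f x) x := by
    intro x hx
    have hc : 0 < Real.cos x := Real.cos_pos_of_mem_Ioo ⟨by linarith [hx.1, Real.pi_pos], hx.2⟩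
    exact (Real.hasDerivAt_tan hc.ne').sub (hF x)
  have hm : MonotoneOn (fun x => Real.tan x - F x) (Ico (0:ℝ) (Real.pi/2)) := by
    apply monotoneOn_of_deriv_nonneg (convex_Ico _ _)
    · intro x hx; exact (hd x hx).continuousAt.continuousWithinAt
    · intro x hx; rw [interior_Ico] at hx
      exact (hd x ⟨hx.1.le, hx.2⟩).differentiableAt.differentiableWithinAt
    · intro x hx; rw [interior_Ico] at hx
      rw [(hd x ⟨hx.1.le, hx.2⟩).deriv]
      have hc : 0 < Real.cos x := Real.cos_pos_of_mem_Ioo ⟨by linarith [hx.1, Real.pi_pos], hx.2⟩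
      have := h x hx
      have e : 1 / Real.cos x ^ 2 = 1 + Real.tan x ^ 2 := by
        rw [Real.tan_eq_sin_div_cos]; field_simp; linarith [Real.sin_sq_add_cos_sq x]
      rw [e]; linarith
  intro x hx
  have := hm ⟨le_refl _, by positivity⟩ hx hx.1
  simp [h0] at this
  linarith

lemma tan_ge1 (x : ℝ) (hx : x ∈ Ico (0:ℝ) (Real.pi/2)) : x ≤ Real.tan x :=
  tan_step (fun x => x) (fun _ => 1) (fun x => hasDerivAt_id x) rfl (fun x _ => by nlinarith [sq_nonneg (Real.tan x)]) x hx

lemma tan_ge3 (x : ℝ) (hx : x ∈ Ico (0:ℝ) (Real.pi/2)) : x + x ^ 3 / 3 ≤ Real.tan x := by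
  refine tan_step (fun x => x + x ^ 3 / 3) (fun x => 1 + x ^ 2) (fun x => ?_) (by norm_num) (fun x hx => ?_) x hx
  · have := (hasDerivAt_id x).add ((hasDerivAt_pow 3 x).div_const 3)
    exact this.congr_deriv (by norm_num; try ring)
  · have := tan_ge1 x ⟨hx.1.le, hx.2⟩
    have := hx.1
    gcongr

lemma tan_ge5 (x : ℝ) (hx : x ∈ Ico (0:ℝ) (Real.pi/2)) : x + x ^ 3 / 3 + 2 * x ^ 5 / 15 ≤ Real.tan x := by
  refine tan_step (fun x => x + x ^ 3 / 3 + 2 * x ^ 5 / 15) (fun x => 1 + x ^ 2 + 2 * x ^ 4 / 3) (fun x => ?_) (by norm_num) (fun x hx => ?_) x hx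
  · have := ((hasDerivAt_id x).add ((hasDerivAt_pow 3 x).div_const 3)).add (((hasDerivAt_pow 5 x).const_mul 2).div_const 15)
    exact this.congr_deriv (by norm_num; try ring)
  · have h1 := tan_ge3 x ⟨hx.1.le, hx.2⟩
    have h2 := hx.1
    have h3 : (x + x ^ 3 / 3) ^ 2 ≤ Real.tan x ^ 2 := by gcongr
    have h4 : 0 ≤ x ^ 6 := by positivity
    nlinarith

lemma cos_exp (x : ℝ) (hx : x ∈ Icc (0:ℝ) (Real.pi/2)) :
    Real.cos x ≤ Real.exp (-(x ^ 2 / 2 + x ^ 4 / 12 + x ^ 6 / 45)) := by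
  set E : ℝ → ℝ := fun x => x ^ 2 / 2 + x ^ 4 / 12 + x ^ 6 / 45 with hE
  have hdE : ∀ x, HasDerivAt E (x + x ^ 3 / 3 + 2 * x ^ 5 / 15) x := by
    intro x
    have := (((hasDerivAt_pow 2 x).div_const 2).add ((hasDerivAt_pow 4 x).div_const 12)).add ((hasDerivAt_pow 6 x).div_const 45)
    exact this.congr_deriv (by norm_num; try ring)
  have hd : ∀ x, HasDerivAt (fun x => Real.cos x * Real.exp (E x))
      (-Real.sin x * Real.exp (E x) + Real.cos x * (Real.exp (E x) * (x + x ^ 3 / 3 + 2 * x ^ 5 / 15))) x := by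
    intro x
    exact (Real.hasDerivAt_cos x).mul ((hdE x).exp)
  have hm : AntitoneOn (fun x => Real.cos x * Real.exp (E x)) (Icc (0:ℝ) (Real.pi/2)) := by
    apply antitoneOn_of_deriv_nonpos (convex_Icc _ _)
    · intro x hx; exact (hd x).continuousAt.continuousWithinAt
    · intro x hx; exact (hd x).differentiableAt.differentiableWithinAt
    · intro x hx; rw [interior_Icc] at hx
      rw [(hd x).deriv]
      have hc : 0 < Real.cos x := Real.cos_pos_of_mem_Ioo ⟨by linarith [hx.1, Real.pi_pos], hx.2⟩
      have h5 := tan_ge5 x ⟨hx.1.le, hx.2⟩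
      have h6 : Real.cos x * (x + x ^ 3 / 3 + 2 * x ^ 5 / 15) ≤ Real.sin x := by
        rw [← Real.tan_mul_cos hc.ne', mul_comm]; gcongr
      have h7 := Real.exp_pos (E x)
      nlinarith
  have := hm ⟨le_refl _, by positivity⟩ hx hx.1
  have e0 : E 0 = 0 := by simp [hE]
  simp only [e0, Real.cos_zero, Real.exp_zero, mul_one] at this
  rw [Real.exp_neg, ← one_div, le_div_iff₀ (Real.exp_pos _)]
  exact this

/-- correction term -/
noncomputable def xx (n : ℕ) (u : ℝ) : ℝ := n * (u ^ 4 / 12 + u ^ 6 / 45)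

lemma exp_quad (x : ℝ) (hx : 0 ≤ x) : Real.exp (-x) ≤ 1 - (x - x ^ 2 / 2) := by
  have h := Real.quadratic_le_exp_of_nonneg hx
  rw [Real.exp_neg, inv_le_iff_one_le_mul₀ (Real.exp_pos _)]
  have h2 : 0 < 1 - (x - x ^ 2 / 2) := by nlinarith [sq_nonneg (x - 1)]
  nlinarith [mul_le_mul_of_nonneg_left h h2.le, sq_nonneg (x^2)]

lemma pt_small (n : ℕ) (u : ℝ) (hu : u ∈ Icc (0:ℝ) (Real.pi/2)) :
    Real.exp (-n * u ^ 2 / 2) * (xx n u - xx n u ^ 2 / 2) ≤ Real.exp (-n * u ^ 2 / 2) - |Real.cos u| ^ n := by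
  have hc : 0 ≤ Real.cos u := Real.cos_nonneg_of_mem_Icc ⟨by linarith [hu.1, Real.pi_pos], hu.2⟩
  rw [abs_of_nonneg hc]
  have h1 := pow_le_pow_left₀ hc (cos_exp u hu) n
  rw [← Real.exp_nat_mul] at h1
  have e : (n:ℝ) * -(u ^ 2 / 2 + u ^ 4 / 12 + u ^ 6 / 45) = -n * u ^ 2 / 2 + -xx n u := by
    unfold xx; ring
  rw [e, Real.exp_add] at h1
  have h2 := exp_quad (xx n u) (by have := hu.1; unfold xx; positivity)
  have h3 := Real.exp_pos (-n * u ^ 2 / 2)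
  nlinarith

lemma pt_large (n : ℕ) (hn : 5 ≤ n) (u : ℝ) (hu : Real.pi/2 < u) :
    xx n u - xx n u ^ 2 / 2 ≤ 0 := by
  have h0 : (3/2:ℝ) < u := by linarith [Real.pi_gt_three]
  have h1 : (2:ℝ) ≤ xx n u := by
    unfold xx
    have hn' : (5:ℝ) ≤ n := by exact_mod_cast hn
    have h4 : (3/2:ℝ)^4 ≤ u^4 := by gcongr
    have h6 : (3/2:ℝ)^6 ≤ u^6 := by gcongr
    norm_num at h4 h6
    nlinarith
  nlinarith


noncomputable def Im (n : ℕ) (a : ℝ) : ℝ := ∫ u in Ioi (0:ℝ), u ^ a * Real.exp (-(n/2) * u ^ 2)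

lemma Im_val (n : ℕ) (hn : 0 < n) (a : ℝ) (ha : -1 < a) :
    Im n a = ((n:ℝ)/2) ^ (-(a+1)/2) * (1/2) * Real.Gamma ((a+1)/2) := by
  have hn' : (0:ℝ) < n := by exact_mod_cast hn
  have h2 := integral_rpow_mul_exp_neg_mul_rpow (p := 2) (q := a) (b := n/2) (by norm_num) ha (by positivity)
  simp only [Real.rpow_two] at h2
  exact h2

lemma Im_rec (n : ℕ) (hn : 0 < n) (a b : ℝ) (ha : -1 < a) (hb : b = a + 2) :
    Im n b = (a + 1) / n * Im n a := by
  have hn' : (0:ℝ) < n := by exact_mod_cast hn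
  rw [hb, Im_val n hn a ha, Im_val n hn (a+2) (by linarith)]
  rw [show (a+2+1)/2 = (a+1)/2 + 1 by ring, Real.Gamma_add_one (by linarith),
    show -(a+2+1)/2 = -(a+1)/2 + (-1) by ring, Real.rpow_add (by positivity), Real.rpow_neg_one]
  field_simp

lemma Im_integ (n : ℕ) (hn : 0 < n) (a : ℝ) (ha : -1 < a) :
    IntegrableOn (fun u : ℝ => u ^ a * Real.exp (-(n/2) * u ^ 2)) (Ioi (0:ℝ)) := by
  have hn' : (0:ℝ) < n := by exact_mod_cast hn
  exact (integrable_rpow_mul_exp_neg_mul_sq (b := n/2) (by positivity) ha).integrableOn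

noncomputable def QQ (n : ℕ) (u : ℝ) : ℝ :=
  Real.exp (-n * u ^ 2 / 2) * (xx n u - xx n u ^ 2 / 2) * u ^ (-(11/4) : ℝ)

noncomputable def QQ' (n : ℕ) (u : ℝ) : ℝ :=
  (n:ℝ)/12 * (u ^ (5/4:ℝ) * Real.exp (-(n/2) * u ^ 2))
  + (n:ℝ)/45 * (u ^ (13/4:ℝ) * Real.exp (-(n/2) * u ^ 2))
  + -(n:ℝ)^2/288 * (u ^ (21/4:ℝ) * Real.exp (-(n/2) * u ^ 2))
  + -(n:ℝ)^2/540 * (u ^ (29/4:ℝ) * Real.exp (-(n/2) * u ^ 2))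
  + -(n:ℝ)^2/4050 * (u ^ (37/4:ℝ) * Real.exp (-(n/2) * u ^ 2))

lemma QQ_eq (n : ℕ) (u : ℝ) (hu : 0 < u) : QQ n u = QQ' n u := by
  have e : ∀ k : ℕ, u ^ ((k:ℝ) + 5/4) = u ^ k * (u ^ 4 * u ^ (-(11/4):ℝ)) := by
    intro k
    rw [← Real.rpow_natCast, ← Real.rpow_natCast, ← Real.rpow_add hu, ← Real.rpow_add hu]
    congr 1; push_cast; ring
  have e0 := e 0
  have e2 := e 2
  have e4 := e 4
  have e6 := e 6
  have e8 := e 8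
  norm_num at e0 e2 e4 e6 e8
  unfold QQ QQ' xx
  rw [show (-(11/4):ℝ) = -11/4 by norm_num] at *
  rw [e0, e2, e4, e6, e8, show -(n:ℝ) * u ^ 2 / 2 = -(n/2) * u ^ 2 by ring]
  ring

lemma QQ_integ (n : ℕ) (hn : 0 < n) : IntegrableOn (QQ n) (Ioi (0:ℝ)) := by
  have : IntegrableOn (QQ' n) (Ioi (0:ℝ)) :=
    ((((((Im_integ n hn (5/4) (by norm_num)).const_mul _).add
      ((Im_integ n hn (13/4) (by norm_num)).const_mul _)).add
      ((Im_integ n hn (21/4) (by norm_num)).const_mul _)).add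
      ((Im_integ n hn (29/4) (by norm_num)).const_mul _)).add
      ((Im_integ n hn (37/4) (by norm_num)).const_mul _))
  exact this.congr_fun (fun u hu => (QQ_eq n u hu).symm) measurableSet_Ioi

lemma QQ_int (n : ℕ) (hn : 0 < n) : ∫ u in Ioi (0:ℝ), QQ n u =
    n * Im n (5/4) * (1/12 + (1/20 - 153/4608)/n - (3825/34560)/n^2 - (126225/1036800)/n^3) := by
  have h0 : ∫ u in Ioi (0:ℝ), QQ n u = ∫ u in Ioi (0:ℝ), QQ' n u :=
    setIntegral_congr_fun measurableSet_Ioi (fun u hu => QQ_eq n u hu)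
  have i0 := (Im_integ n hn (5/4) (by norm_num)).const_mul ((n:ℝ)/12)
  have i1 := (Im_integ n hn (13/4) (by norm_num)).const_mul ((n:ℝ)/45)
  have i2 := (Im_integ n hn (21/4) (by norm_num)).const_mul (-(n:ℝ)^2/288)
  have i3 := (Im_integ n hn (29/4) (by norm_num)).const_mul (-(n:ℝ)^2/540)
  have i4 := (Im_integ n hn (37/4) (by norm_num)).const_mul (-(n:ℝ)^2/4050)
  have h1 : ∫ u in Ioi (0:ℝ), QQ' n u = (n:ℝ)/12 * Im n (5/4) + (n:ℝ)/45 * Im n (13/4)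
     + -(n:ℝ)^2/288 * Im n (21/4) + -(n:ℝ)^2/540 * Im n (29/4) + -(n:ℝ)^2/4050 * Im n (37/4) := by
    unfold QQ'
    rw [integral_add, integral_add, integral_add, integral_add]
    · simp only [integral_const_mul]
      rfl
    · exact i0
    · exact i1
    · exact i0.add i1
    · exact i2
    · exact (i0.add i1).add i2
    · exact i3
    · exact ((i0.add i1).add i2).add i3
    · exact i4
  have r1 := Im_rec n hn (5/4) (13/4) (by norm_num) (by norm_num)
  have r2 := Im_rec n hn (13/4) (21/4) (by norm_num) (by norm_num)
  have r3 := Im_rec n hn (21/4) (29/4) (by norm_num) (by norm_num)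
  have r4 := Im_rec n hn (29/4) (37/4) (by norm_num) (by norm_num)
  have hn' : (n:ℝ) ≠ 0 := by positivity
  rw [h0, h1, r4, r3, r2, r1]
  field_simp
  ring

lemma QQ_lower (n : ℕ) (hn : 5 ≤ n) : n * Im n (5/4) * 0.0812 ≤ ∫ u in Ioi (0:ℝ), QQ n u := by
  rw [QQ_int n (by omega)]
  have hn' : (5:ℝ) ≤ n := by exact_mod_cast hn
  have hI : 0 ≤ Im n (5/4) := by
    apply setIntegral_nonneg measurableSet_Ioi
    intro u hu
    have : (0:ℝ) < u := hu
    positivity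
  gcongr
  generalize (n:ℝ) = m at *
  obtain ⟨t, ht0, ht⟩ : ∃ t, 0 ≤ t ∧ m = 5 + t := ⟨m - 5, by linarith, by ring⟩
  have hm0 : 0 < m := by linarith
  have : 1/12 + (1/20 - 153/4608)/m - (3825/34560)/m^2 - (126225/1036800)/m^3 - 0.0812
     = ((1/12 - 0.0812) * m ^ 3 + (1/20 - 153/4608) * m^2 - 3825/34560 * m - 126225/1036800) / m ^ 3 := by
    field_simp
    ring
  have h2 : 0 ≤ ((1/12 - 0.0812) * m ^ 3 + (1/20 - 153/4608) * m^2 - 3825/34560 * m - 126225/1036800) / m ^ 3 := by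
    apply div_nonneg _ (by positivity)
    rw [ht]
    nlinarith [pow_nonneg ht0 3, pow_nonneg ht0 2]
  linarith


noncomputable def WW (n : ℕ) : ℝ := ∫ v in (-(Real.pi/2))..(Real.pi/2), Real.cos v ^ n

lemma WW_pos (n : ℕ) : 0 ≤ WW n := by
  apply intervalIntegral.integral_nonneg (by linarith [Real.pi_pos])
  intro v hv
  exact pow_nonneg (Real.cos_nonneg_of_mem_Icc hv) n

lemma WW_rec (n : ℕ) : WW (n+2) = (n+1)/(n+2) * WW n := by
  unfold WW
  rw [integral_cos_pow]
  simp

lemma WW_5 : WW 5 = 16/15 := by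
  have h1 := WW_rec 1
  have h3 := WW_rec 3
  have : WW 1 = 2 := by
    unfold WW; simp; norm_num
  norm_num at h1 h3
  rw [h3, h1, this]; norm_num

lemma WW_6 : WW 6 = 5 * Real.pi / 16 := by
  have h0 := WW_rec 0
  have h2 := WW_rec 2
  have h4 := WW_rec 4
  have : WW 0 = Real.pi := by
    unfold WW; simp
  norm_num at h0 h2 h4
  rw [h4, h2, h0, this]; ring

lemma WW_sq (n : ℕ) (hn : 5 ≤ n) : WW n ^ 2 * (n + 0.55) ≤ 6.32 := by
  induction n using Nat.strong_induction_on with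
  | _ n ih =>
    rcases (by omega : n = 5 ∨ n = 6 ∨ 7 ≤ n) with rfl | rfl | h
    · rw [WW_5]; norm_num
    · rw [WW_6]
      have := Real.pi_lt_d4
      have := Real.pi_pos
      have : Real.pi ^ 2 ≤ 3.1416 ^ 2 := by gcongr
      norm_num at *
      nlinarith
    · obtain ⟨m, rfl⟩ : ∃ m, n = m + 2 := ⟨n - 2, by omega⟩
      have h1 := ih m (by omega) (by omega)
      rw [WW_rec]
      have hm : (5:ℝ) ≤ m := by exact_mod_cast (by omega : 5 ≤ m)
      push_cast
      refine le_trans ?_ h1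
      have : (((m:ℝ)+1)/(m+2))^2 * (m + 2 + 0.55) ≤ m + 0.55 := by
        rw [div_pow, div_mul_eq_mul_div, div_le_iff₀ (by positivity)]
        nlinarith
      calc _ = WW m ^ 2 * ((((m:ℝ)+1)/(m+2))^2 * (m + 2 + 0.55)) := by ring
        _ ≤ _ := by gcongr

lemma vcos_le (v : ℝ) (hv : v ∈ Icc (-(Real.pi/2)) (Real.pi/2)) : v ^ 2 * Real.cos v ≤ v * Real.sin v := by
  wlog h : 0 ≤ v with H
  · have := H (-v) ⟨by linarith [hv.2], by linarith [hv.1]⟩ (by linarith)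
    simpa using this
  rcases hv.2.eq_or_lt with e | hlt
  · rw [e]; simp; positivity
  have hc : 0 < Real.cos v := Real.cos_pos_of_mem_Ioo ⟨by linarith [Real.pi_pos], hlt⟩
  have h1 := tan_ge1 v ⟨h, hlt⟩
  have h2 : v * Real.cos v ≤ Real.sin v := by
    rw [← Real.tan_mul_cos hc.ne']; gcongr
  nlinarith

lemma M2_le (n : ℕ) : (∫ v in (-(Real.pi/2))..(Real.pi/2), v ^ 2 * Real.cos v ^ (n+1)) ≤ WW (n+1) / (n+1) := by
  have h1 : ∫ v in (-(Real.pi/2))..(Real.pi/2), (Real.cos v ^ (n+1) - (n+1) * (v * Real.sin v * Real.cos v ^ n)) = 0 := by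
    have hd : ∀ v ∈ uIcc (-(Real.pi/2)) (Real.pi/2), HasDerivAt (fun v => v * Real.cos v ^ (n+1)) 
        (Real.cos v ^ (n+1) - (n+1) * (v * Real.sin v * Real.cos v ^ n)) v := by
      intro v _
      refine ((hasDerivAt_id v).mul ((Real.hasDerivAt_cos v).pow (n+1))).congr_deriv ?_
      simp; ring
    rw [intervalIntegral.integral_eq_sub_of_hasDerivAt hd (Continuous.intervalIntegrable (by fun_prop) _ _)]
    simp
  rw [intervalIntegral.integral_sub (Continuous.intervalIntegrable (by fun_prop) _ _) (Continuous.intervalIntegrable (by fun_prop) _ _),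
    intervalIntegral.integral_const_mul] at h1
  have h2 : (∫ v in (-(Real.pi/2))..(Real.pi/2), v ^ 2 * Real.cos v ^ (n+1)) ≤ ∫ v in (-(Real.pi/2))..(Real.pi/2), (v * Real.sin v * Real.cos v ^ n) := by
    apply intervalIntegral.integral_mono_on (by linarith [Real.pi_pos]) (Continuous.intervalIntegrable (by fun_prop) _ _) (Continuous.intervalIntegrable (by fun_prop) _ _)
    intro v hv
    have := vcos_le v hv
    have hc := pow_nonneg (Real.cos_nonneg_of_mem_Icc hv) n
    rw [pow_succ (Real.cos v)]; nlinarith [mul_le_mul_of_nonneg_left this hc]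
  rw [le_div_iff₀ (by positivity)]
  unfold WW
  nlinarith [(by positivity : (0:ℝ) < n + 1)]

lemma M4_le (n : ℕ) : (∫ v in (-(Real.pi/2))..(Real.pi/2), v ^ 4 * Real.cos v ^ (n+1)) ≤ 3 * WW (n+1) / (n+1) ^ 2 := by
  have h1 : ∫ v in (-(Real.pi/2))..(Real.pi/2), (3 * (v ^ 2 * Real.cos v ^ (n+1)) - (n+1) * (v ^ 3 * Real.sin v * Real.cos v ^ n)) = 0 := by
    have hd : ∀ v ∈ uIcc (-(Real.pi/2)) (Real.pi/2), HasDerivAt (fun v => v ^ 3 * Real.cos v ^ (n+1)) 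
        (3 * (v ^ 2 * Real.cos v ^ (n+1)) - (n+1) * (v ^ 3 * Real.sin v * Real.cos v ^ n)) v := by
      intro v _
      refine ((hasDerivAt_pow 3 v).mul ((Real.hasDerivAt_cos v).pow (n+1))).congr_deriv ?_
      simp; ring
    rw [intervalIntegral.integral_eq_sub_of_hasDerivAt hd (Continuous.intervalIntegrable (by fun_prop) _ _)]
    simp
  rw [intervalIntegral.integral_sub (Continuous.intervalIntegrable (by fun_prop) _ _) (Continuous.intervalIntegrable (by fun_prop) _ _),
    intervalIntegral.integral_const_mul, intervalIntegral.integral_const_mul] at h1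
  have h2 : (∫ v in (-(Real.pi/2))..(Real.pi/2), v ^ 4 * Real.cos v ^ (n+1)) ≤ ∫ v in (-(Real.pi/2))..(Real.pi/2), (v ^ 3 * Real.sin v * Real.cos v ^ n) := by
    apply intervalIntegral.integral_mono_on (by linarith [Real.pi_pos]) (Continuous.intervalIntegrable (by fun_prop) _ _) (Continuous.intervalIntegrable (by fun_prop) _ _)
    intro v hv
    have := vcos_le v hv
    have hc := mul_nonneg (pow_nonneg (Real.cos_nonneg_of_mem_Icc hv) n) (sq_nonneg v)
    rw [pow_succ (Real.cos v)]; nlinarith [mul_le_mul_of_nonneg_left this hc]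
  have h3 := M2_le n
  have hp : (0:ℝ) < n + 1 := by positivity
  rw [le_div_iff₀ hp] at h3
  rw [le_div_iff₀ (by positivity)]
  nlinarith

lemma rpow_amgm (r : ℝ) (hr : 0 < r) : r ^ (-(11/4):ℝ) ≤ 1/4 * r⁻¹ ^ 2 + 3/4 * r⁻¹ ^ 3 := by
  have h := Real.geom_mean_le_arith_mean2_weighted (w₁ := 1/4) (w₂ := 3/4) (p₁ := r⁻¹ ^ 2) (p₂ := r⁻¹ ^ 3)
    (by norm_num) (by norm_num) (by positivity) (by positivity) (by norm_num)
  refine le_trans (le_of_eq ?_) h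
  rw [← Real.rpow_natCast, ← Real.rpow_natCast, ← Real.rpow_mul (by positivity), ← Real.rpow_mul (by positivity),
    ← Real.rpow_add (by positivity), Real.rpow_neg hr.le, Real.inv_rpow hr.le]
  norm_num

lemma sym_bd (t : ℝ) (ht : t ^ 2 ≤ 1/4) : (1 + t) ^ (-(11/4):ℝ) + (1 - t) ^ (-(11/4):ℝ) ≤ 2 * (1 + 5.25 * t ^ 2 + 22 * t ^ 4) := by
  have h1 : 0 < 1 + t := by nlinarith
  have h2 : 0 < 1 - t := by nlinarith
  have a1 := rpow_amgm _ h1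
  have a2 := rpow_amgm _ h2
  set y := t ^ 2 with hy
  have hy0 : 0 ≤ y := sq_nonneg t
  have hp : 0 < 1 - y := by linarith
  have e1 : (1+t)⁻¹ ^ 2 + (1-t)⁻¹ ^ 2 = 2 * (1 + y) / (1 - y) ^ 2 := by
    have : 1 - y = (1 + t) * (1 - t) := by rw [hy]; ring
    rw [this, hy]; field_simp; ring
  have e2 : (1+t)⁻¹ ^ 3 + (1-t)⁻¹ ^ 3 = 2 * (1 + 3 * y) / (1 - y) ^ 3 := by
    have : 1 - y = (1 + t) * (1 - t) := by rw [hy]; ring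
    rw [this, hy]; field_simp; ring
  have e3 : 1/4 * ((1 + y) / (1 - y) ^ 2) + 3/4 * ((1 + 3 * y) / (1 - y) ^ 3) ≤ 1 + 5.25 * y + 22 * y ^ 2 := by
    have : 1/4 * ((1 + y) / (1 - y) ^ 2) + 3/4 * ((1 + 3 * y) / (1 - y) ^ 3) =
      (1/4 * (1 + y) * (1 - y) + 3/4 * (1 + 3 * y)) / (1 - y) ^ 3 := by field_simp
    rw [this, div_le_iff₀ (by positivity)]
    have k : 0 ≤ 9.5 - 51.25 * y + 60.75 * y ^ 2 - 22 * y ^ 3 := by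
      nlinarith [mul_nonneg hy0 (sub_nonneg.2 ht), mul_nonneg (mul_nonneg hy0 hy0) (sub_nonneg.2 ht), sq_nonneg (y - 1/4)]
    nlinarith [mul_nonneg (sq_nonneg y) k]
  have e4 : t ^ 4 = y ^ 2 := by rw [hy]; ring
  rw [e4]
  have e1' : 2 * (1 + y) / (1 - y) ^ 2 = 2 * ((1 + y) / (1 - y) ^ 2) := by ring
  have e2' : 2 * (1 + 3 * y) / (1 - y) ^ 3 = 2 * ((1 + 3 * y) / (1 - y) ^ 3) := by ring
  linarith


noncomputable def CC (n : ℕ) : ℝ := 1 + 5.25 / Real.pi ^ 2 / n + 66 / Real.pi ^ 4 / n ^ 2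

lemma interval_bd (n : ℕ) (hn : 0 < n) (k : ℕ) (hk : 1 ≤ k) :
    (∫ u in (k * Real.pi - Real.pi/2)..(k * Real.pi + Real.pi/2), |Real.cos u| ^ n * u ^ (-(11/4):ℝ))
      ≤ WW n * CC n * Real.pi ^ (-(11/4):ℝ) * (k:ℝ) ^ (-(11/4):ℝ) := by
  have hpi := Real.pi_pos
  have hk' : (1:ℝ) ≤ k := by exact_mod_cast hk
  have hkp : Real.pi ≤ k * Real.pi := by nlinarith
  set c : ℝ := k * Real.pi with hc
  have hc0 : 0 < c := by linarith
  have e1 : (∫ u in (c - Real.pi/2)..(c + Real.pi/2), |Real.cos u| ^ n * u ^ (-(11/4):ℝ))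
     = ∫ v in (-(Real.pi/2))..(Real.pi/2), Real.cos v ^ n * (c + v) ^ (-(11/4):ℝ) := by
    have := intervalIntegral.integral_comp_add_right (a := -(Real.pi/2)) (b := Real.pi/2) (fun u => |Real.cos u| ^ n * u ^ (-(11/4):ℝ)) c
    rw [show -(Real.pi/2) + c = c - Real.pi/2 by ring, show Real.pi/2 + c = c + Real.pi/2 by ring] at this
    rw [← this]
    apply intervalIntegral.integral_congr
    intro v hv
    rw [uIcc_of_le (by linarith)] at hv
    simp only
    rw [hc, Real.cos_add_nat_mul_pi, abs_mul, abs_pow, abs_neg, abs_one, one_pow, one_mul, abs_of_nonneg (Real.cos_nonneg_of_mem_Icc hv), add_comm v]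
  have e2 : (∫ v in (-(Real.pi/2))..(Real.pi/2), Real.cos v ^ n * (c + v) ^ (-(11/4):ℝ)) =
      ∫ v in (-(Real.pi/2))..(Real.pi/2), Real.cos v ^ n * (c - v) ^ (-(11/4):ℝ) := by
    have := intervalIntegral.integral_comp_neg (a := -(Real.pi/2)) (b := Real.pi/2) (fun v => Real.cos v ^ n * (c + v) ^ (-(11/4):ℝ))
    simp only [neg_neg, Real.cos_neg] at this
    rw [← this]; simp only [sub_eq_add_neg]
  have i1 : IntervalIntegrable (fun v => Real.cos v ^ n * (c + v) ^ (-(11/4):ℝ)) volume (-(Real.pi/2)) (Real.pi/2) := by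
    apply ContinuousOn.intervalIntegrable
    rw [uIcc_of_le (by linarith)]
    apply ContinuousOn.mul (by fun_prop)
    apply ContinuousOn.rpow_const (by fun_prop)
    intro v hv; left; linarith [hv.1]
  have i2 : IntervalIntegrable (fun v => Real.cos v ^ n * (c - v) ^ (-(11/4):ℝ)) volume (-(Real.pi/2)) (Real.pi/2) := by
    apply ContinuousOn.intervalIntegrable
    rw [uIcc_of_le (by linarith)]
    apply ContinuousOn.mul (by fun_prop)
    apply ContinuousOn.rpow_const (by fun_prop)
    intro v hv; left; linarith [hv.2]
  have h3 : (∫ v in (-(Real.pi/2))..(Real.pi/2), (Real.cos v ^ n * (c + v) ^ (-(11/4):ℝ) + Real.cos v ^ n * (c - v) ^ (-(11/4):ℝ)))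
     ≤ ∫ v in (-(Real.pi/2))..(Real.pi/2), (2 * c ^ (-(11/4):ℝ)) * (Real.cos v ^ n + (5.25 / Real.pi ^ 2) * (v ^ 2 * Real.cos v ^ n) + (22 / Real.pi ^ 4) * (v ^ 4 * Real.cos v ^ n)) := by
    apply intervalIntegral.integral_mono_on (by linarith) (i1.add i2) (Continuous.intervalIntegrable (by fun_prop) _ _)
    intro v hv
    have hcn := pow_nonneg (Real.cos_nonneg_of_mem_Icc hv) n
    have hv2 : v ^ 2 ≤ (Real.pi/2) ^ 2 := by
      apply sq_le_sq'; exact hv.1; exact hv.2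
    have hy : (v / c) ^ 2 ≤ v ^ 2 / Real.pi ^ 2 := by
      rw [div_pow]; gcongr
    have hy1 : v ^ 2 / Real.pi ^ 2 ≤ 1/4 := by
      rw [div_le_iff₀ (by positivity)]; linarith
    have h := sym_bd (v / c) (hy.trans hy1)
    have hA : c + v = c * (1 + v / c) := by field_simp
    have hB : c - v = c * (1 - v / c) := by field_simp
    have b1 : 0 ≤ 1 + v/c := by
      have : 0 ≤ c * (1 + v/c) := by rw [← hA]; linarith [hv.1]
      exact nonneg_of_mul_nonneg_right this hc0
    have b2 : 0 ≤ 1 - v/c := by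
      have : 0 ≤ c * (1 - v/c) := by rw [← hB]; linarith [hv.2]
      exact nonneg_of_mul_nonneg_right this hc0
    rw [hA, hB, Real.mul_rpow hc0.le b1, Real.mul_rpow hc0.le b2]
    have hcp : 0 < c ^ (-(11/4):ℝ) := Real.rpow_pos_of_pos hc0 _
    have hy4 : (v / c) ^ 4 ≤ v ^ 4 / Real.pi ^ 4 := by
      rw [div_pow]; gcongr
    have h' : (1 + v/c) ^ (-(11/4):ℝ) + (1 - v/c) ^ (-(11/4):ℝ) ≤ 2 * (1 + 5.25 * (v ^ 2 / Real.pi ^ 2) + 22 * (v ^ 4 / Real.pi ^ 4)) := by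
      linarith
    calc _ = (Real.cos v ^ n * c ^ (-(11/4):ℝ)) * ((1 + v/c) ^ (-(11/4):ℝ) + (1 - v/c) ^ (-(11/4):ℝ)) := by ring
      _ ≤ (Real.cos v ^ n * c ^ (-(11/4):ℝ)) * (2 * (1 + 5.25 * (v ^ 2 / Real.pi ^ 2) + 22 * (v ^ 4 / Real.pi ^ 4))) := by gcongr
      _ = _ := by ring
  rw [intervalIntegral.integral_add i1 i2, ← e2, intervalIntegral.integral_const_mul,
    intervalIntegral.integral_add (Continuous.intervalIntegrable (by fun_prop) _ _) (Continuous.intervalIntegrable (by fun_prop) _ _),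
    intervalIntegral.integral_add (Continuous.intervalIntegrable (by fun_prop) _ _) (Continuous.intervalIntegrable (by fun_prop) _ _),
    intervalIntegral.integral_const_mul, intervalIntegral.integral_const_mul, ← e1] at h3
  obtain ⟨m, rfl⟩ : ∃ m, n = m + 1 := ⟨n - 1, by omega⟩
  have h4 := M2_le m
  have h5 := M4_le m
  have hcp : 0 < c ^ (-(11/4):ℝ) := Real.rpow_pos_of_pos hc0 _
  have hcp2 : c ^ (-(11/4):ℝ) = Real.pi ^ (-(11/4):ℝ) * (k:ℝ) ^ (-(11/4):ℝ) := by
    rw [hc, Real.mul_rpow (by positivity) hpi.le, mul_comm]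
  rw [mul_assoc, ← hcp2]
  have h6 : (5.25 / Real.pi ^ 2) * (∫ v in (-(Real.pi/2))..(Real.pi/2), v ^ 2 * Real.cos v ^ (m+1)) ≤ (5.25 / Real.pi ^ 2) * (WW (m+1) / (m+1)) := by gcongr
  have h7 : (22 / Real.pi ^ 4) * (∫ v in (-(Real.pi/2))..(Real.pi/2), v ^ 4 * Real.cos v ^ (m+1)) ≤ (22 / Real.pi ^ 4) * (3 * WW (m+1) / (m+1) ^ 2) := by gcongr
  have h8 : (∫ v in (-(Real.pi/2))..(Real.pi/2), Real.cos v ^ (m+1)) = WW (m+1) := rfl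
  have h9 : WW (m+1) * CC (m+1) = WW (m+1) + (5.25 / Real.pi ^ 2) * (WW (m+1) / (m+1)) + (22 / Real.pi ^ 4) * (3 * WW (m+1) / (m+1) ^ 2) := by
    unfold CC; push_cast; ring
  rw [h9]
  rw [h8] at h3
  have h10 : c ^ (-(11/4):ℝ) * (WW (m+1) + (5.25 / Real.pi ^ 2) * (∫ v in (-(Real.pi/2))..(Real.pi/2), v ^ 2 * Real.cos v ^ (m+1)) + (22 / Real.pi ^ 4) * (∫ v in (-(Real.pi/2))..(Real.pi/2), v ^ 4 * Real.cos v ^ (m+1)))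
    ≤ c ^ (-(11/4):ℝ) * (WW (m+1) + (5.25 / Real.pi ^ 2) * (WW (m+1) / (m+1)) + (22 / Real.pi ^ 4) * (3 * WW (m+1) / (m+1) ^ 2)) := by
    gcongr
  linarith

lemma rp_le (a b : ℝ) (ha : 0 < a) (hb : 0 < b) (h : 1 ≤ b ^ 4 * a ^ 11) : a ^ (-(11/4):ℝ) ≤ b := by
  have h1 : 0 < a ^ (-(11/4):ℝ) := Real.rpow_pos_of_pos ha _
  have h2 : (a ^ (-(11/4):ℝ)) ^ 4 * a ^ 11 = 1 := by
    rw [← Real.rpow_natCast, ← Real.rpow_mul ha.le, ← Real.rpow_natCast a 11, ← Real.rpow_add ha]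
    norm_num
  have h3 : (a ^ (-(11/4):ℝ)) ^ 4 ≤ b ^ 4 := by
    have : 0 < a ^ 11 := by positivity
    exact le_of_mul_le_mul_right (h2.le.trans h) this
  exact le_of_pow_le_pow_left₀ (by norm_num) hb.le h3

lemma zeta_bd (N : ℕ) (hN : 3 ≤ N) : ∑ k ∈ Finset.range N, ((k+1 : ℕ):ℝ) ^ (-(11/4):ℝ) ≤
    1.265 - 0.00727 * (9 / (N + 1/2) + 81 / (N + 1/2) ^ 2) := by
  induction N, hN using Nat.le_induction with
  | base =>
    simp only [Finset.sum_range_succ, Finset.sum_range_zero]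
    have h2 := rp_le 2 0.1488 (by norm_num) (by norm_num) (by norm_num)
    have h3 := rp_le 3 0.0489 (by norm_num) (by norm_num) (by norm_num)
    norm_num at *
    linarith
  | succ N hN ih =>
    rw [Finset.sum_range_succ]
    have hN' : (3:ℝ) ≤ N := by exact_mod_cast hN
    have h6 := rp_le 6 0.00727 (by norm_num) (by norm_num) (by norm_num)
    have h := rpow_amgm (((N+1:ℕ):ℝ)/6) (by positivity)
    rw [Real.div_rpow (by positivity) (by norm_num), div_le_iff₀ (by positivity)] at h
    push_cast at *
    set x : ℝ := (N:ℝ) + 1 with hx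
    have hx0 : 4 ≤ x := by linarith
    have k2 : x⁻¹ ^ 2 ≤ 1 / (x - 1/2) - 1 / (x + 1/2) := by
      have a1 : 0 < x - 1/2 := by linarith
      have : 1 / (x - 1/2) - 1 / (x + 1/2) = 1 / (x ^ 2 - 1/4) := by
        have : x ^ 2 - 1/4 = (x - 1/2) * (x + 1/2) := by ring
        rw [this, div_sub_div _ _ a1.ne' (by positivity)]; congr 1; ring
      rw [this, inv_pow, ← one_div]
      apply one_div_le_one_div_of_le <;> nlinarith
    have k3 : 2 * x⁻¹ ^ 3 ≤ 1 / (x - 1/2) ^ 2 - 1 / (x + 1/2) ^ 2 := by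
      have a1 : 0 < x - 1/2 := by linarith
      have : 1 / (x - 1/2) ^ 2 - 1 / (x + 1/2) ^ 2 = 2 * x / (x ^ 2 - 1/4) ^ 2 := by
        have : x ^ 2 - 1/4 = (x - 1/2) * (x + 1/2) := by ring
        rw [this, mul_pow, div_sub_div _ _ (pow_pos a1 2).ne' (by positivity)]; congr 1; ring
      have a2 : 0 < x ^ 2 - 1/4 := by nlinarith
      rw [this, inv_pow, ← div_eq_mul_inv, div_le_div_iff₀ (by positivity) (by positivity)]
      have a3 : (x ^ 2 - 1/4) ^ 2 ≤ (x ^ 2) ^ 2 := by gcongr; linarith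
      nlinarith
    have e : (N:ℝ) + 1/2 = x - 1/2 := by rw [hx]; ring
    rw [e] at ih
    have e2 : 1/4 * (x/6)⁻¹ ^ 2 + 3/4 * (x/6)⁻¹ ^ 3 = 9 * x⁻¹ ^ 2 + 162 * x⁻¹ ^ 3 := by
      field_simp; ring
    rw [e2] at h
    have h7 : (9 * x⁻¹ ^ 2 + 162 * x⁻¹ ^ 3) * 6 ^ (-(11/4):ℝ) ≤ (9 * x⁻¹ ^ 2 + 162 * x⁻¹ ^ 3) * 0.00727 := by gcongr
    have t1 : 9 / (x - 1/2) = 9 * (1 / (x - 1/2)) := by ring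
    have t2 : 9 / (x + 1/2) = 9 * (1 / (x + 1/2)) := by ring
    have t3 : 81 / (x - 1/2) ^ 2 = 81 * (1 / (x - 1/2) ^ 2) := by ring
    have t4 : 81 / (x + 1/2) ^ 2 = 81 * (1 / (x + 1/2) ^ 2) := by ring
    rw [t2, t4]
    rw [t1, t3] at ih
    linarith

lemma RR_integ (n : ℕ) : IntegrableOn (fun u => |Real.cos u| ^ n * u ^ (-(11/4):ℝ)) (Ioi (Real.pi/2)) := by
  have h := integrableOn_Ioi_rpow_of_lt (a := -(11/4)) (by norm_num) (c := Real.pi/2) (by positivity)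
  refine h.bdd_mul (c := 1) (by fun_prop) ?_
  filter_upwards with u
  rw [Real.norm_eq_abs, abs_of_nonneg (by positivity)]
  exact pow_le_one₀ (abs_nonneg _) (abs_cos_le _)

lemma RR_bd (n : ℕ) (hn : 0 < n) : ∫ u in Ioi (Real.pi/2), |Real.cos u| ^ n * u ^ (-(11/4):ℝ) ≤
    WW n * CC n * Real.pi ^ (-(11/4):ℝ) * 1.265 := by
  have hpi := Real.pi_pos
  have hCC : 0 ≤ CC n := by unfold CC; positivity
  have hW := WW_pos n
  have ht : Filter.Tendsto (fun N : ℕ => (N:ℝ) * Real.pi + Real.pi/2) Filter.atTop Filter.atTop := by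
    apply Filter.tendsto_atTop_add_const_right
    exact Filter.Tendsto.atTop_mul_const hpi tendsto_natCast_atTop_atTop
  have hlim := intervalIntegral_tendsto_integral_Ioi (Real.pi/2) (RR_integ n) ht
  apply le_of_tendsto hlim
  filter_upwards [Filter.eventually_ge_atTop 3] with N hN
  have hsum := intervalIntegral.sum_integral_adjacent_intervals (f := fun u => |Real.cos u| ^ n * u ^ (-(11/4):ℝ)) (μ := volume)
    (a := fun k : ℕ => (k:ℝ) * Real.pi + Real.pi/2) (n := N) (by
      intro k _
      apply ContinuousOn.intervalIntegrable
      apply ContinuousOn.mul (by fun_prop)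
      apply ContinuousOn.rpow_const (by fun_prop)
      intro v hv; left
      rw [uIcc_of_le (by push_cast; nlinarith)] at hv
      have : 0 < (k:ℝ) * Real.pi + Real.pi/2 := by positivity
      linarith [hv.1])
  simp only [Nat.cast_zero, zero_mul, zero_add] at hsum
  rw [← hsum]
  calc _ ≤ ∑ k ∈ Finset.range N, WW n * CC n * Real.pi ^ (-(11/4):ℝ) * ((k+1 : ℕ):ℝ) ^ (-(11/4):ℝ) := by
        apply Finset.sum_le_sum
        intro k _
        have := interval_bd n hn (k+1) (by omega)
        rwa [show ((k+1:ℕ):ℝ) * Real.pi - Real.pi/2 = k * Real.pi + Real.pi/2 by push_cast; ring] at this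
    _ ≤ _ := by
        rw [← Finset.mul_sum]
        gcongr
        refine (zeta_bd N hN).trans ?_
        have : (0:ℝ) ≤ 0.00727 * (9 / (N + 1/2) + 81 / (N + 1/2) ^ 2) := by positivity
        linarith


lemma Gamma_ub (x δ : ℝ) (hx : 0 < x) (h0 : 0 < δ) (h1 : δ < 1) :
    Real.Gamma (x + δ) ≤ Real.Gamma x * x ^ δ := by
  have h := Real.Gamma_mul_add_mul_le_rpow_Gamma_mul_rpow_Gamma (s := x) (t := x + 1) (a := 1 - δ) (b := δ) hx (by linarith) (by linarith) h0 (by ring)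
  rw [show (1 - δ) * x + δ * (x + 1) = x + δ by ring, Real.Gamma_add_one hx.ne', Real.mul_rpow hx.le (Real.Gamma_pos_of_pos hx).le] at h
  refine h.trans (le_of_eq ?_)
  have : Real.Gamma x ^ (1 - δ) * Real.Gamma x ^ δ = Real.Gamma x := by
    rw [← Real.rpow_add (Real.Gamma_pos_of_pos hx)]; simp
  calc _ = (Real.Gamma x ^ (1 - δ) * Real.Gamma x ^ δ) * x ^ δ := by ring
    _ = _ := by rw [this]

lemma Gamma_shift (x : ℝ) (hx : 0 < x) (N : ℕ) : Real.Gamma (x + N) = Real.Gamma x * ∏ k ∈ Finset.range N, (x + k) := by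
  induction N with
  | zero => simp
  | succ N ih =>
    rw [Finset.prod_range_succ, ← mul_assoc, ← ih]
    push_cast
    rw [← add_assoc, Real.Gamma_add_one (by positivity)]; ring

lemma Gamma_98 : 0.93 ≤ Real.Gamma (9/8) := by
  have h1 := Gamma_shift (9/8) (by norm_num) 5
  have h2 := Gamma_ub (9/8 + (5:ℕ)) (7/8) (by norm_num) (by norm_num) (by norm_num)
  have h3 : Real.Gamma (9/8 + (5:ℕ) + 7/8) = 720 := by
    have := Real.Gamma_nat_eq_factorial 6
    norm_num [Nat.factorial] at *
  rw [h3, h1] at h2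
  have h4 : ((9/8 + (5:ℕ) : ℝ)) ^ (7/8:ℝ) ≤ 4.884 := by
    have : (0:ℝ) ≤ (9/8 + (5:ℕ) : ℝ) ^ (7/8:ℝ) := by positivity
    apply le_of_pow_le_pow_left₀ (n := 8) (by norm_num) (by norm_num)
    rw [← Real.rpow_natCast, ← Real.rpow_mul (by positivity)]
    norm_num
  norm_num [Finset.prod_range_succ] at h2 h4 ⊢
  have hG := Real.Gamma_pos_of_pos (show (0:ℝ) < 9/8 by norm_num)
  have h5 : Real.Gamma (9/8) * (5294205/32768) * (49/8) ^ (7/8:ℝ) ≤ Real.Gamma (9/8) * (5294205/32768) * (1221/250) := by gcongr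
  nlinarith

lemma rho_bd : 1.0012 * (Real.sqrt Real.pi / 2) ≤ Real.Gamma (11/8) := by
  have h1 := Gamma_shift (11/8) (by norm_num) 40
  have h2 := Gamma_shift (3/2) (by norm_num) 40
  have h3 := Gamma_ub (11/8 + (40:ℕ)) (1/8) (by norm_num) (by norm_num) (by norm_num)
  rw [show (11/8 + (40:ℕ) + 1/8 : ℝ) = 3/2 + (40:ℕ) by norm_num, h1, h2] at h3
  have h4 : Real.Gamma (3/2) = Real.sqrt Real.pi / 2 := by
    rw [show (3/2:ℝ) = 1/2 + 1 by norm_num, Real.Gamma_add_one (by norm_num), Real.Gamma_one_half_eq]; ring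
  rw [h4] at h3
  set s := Real.sqrt Real.pi / 2 with hs
  have hs0 : 0 < s := by positivity
  set A := ∏ k ∈ Finset.range 40, ((11/8:ℝ) + k) with hA
  set B := ∏ k ∈ Finset.range 40, ((3/2:ℝ) + k) with hB
  have hA0 : 0 < A := Finset.prod_pos (fun k _ => by positivity)
  have key : 1.0012 * A * (11/8 + (40:ℕ) : ℝ) ^ (1/8:ℝ) ≤ B := by
    apply le_of_pow_le_pow_left₀ (n := 8) (by norm_num) (Finset.prod_nonneg (fun k _ => by positivity))
    rw [mul_pow, ← Real.rpow_natCast ((11/8 + (40:ℕ) : ℝ) ^ (1/8:ℝ)), ← Real.rpow_mul (by positivity), hA]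
    norm_num [Finset.prod_range_succ]
  have hr : 0 < (11/8 + (40:ℕ) : ℝ) ^ (1/8:ℝ) := by positivity
  have : 1.0012 * s * (A * (11/8 + (40:ℕ) : ℝ) ^ (1/8:ℝ)) ≤ Real.Gamma (11/8) * (A * (11/8 + (40:ℕ) : ℝ) ^ (1/8:ℝ)) := by
    calc _ = s * (1.0012 * A * (11/8 + (40:ℕ) : ℝ) ^ (1/8:ℝ)) := by ring
      _ ≤ s * B := by gcongr
      _ ≤ _ := by linarith
  exact le_of_mul_le_mul_right this (by positivity)

lemma PL (n : ℕ) (hn : 5 ≤ n) : WW n * CC n * Real.pi ^ (-(11/4):ℝ) * 1.265 ≤ n * Im n (5/4) * 0.0812 := by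
  have hn' : (5:ℝ) ≤ n := by exact_mod_cast hn
  have hpi := Real.pi_pos
  have hpi1 := Real.pi_gt_d4
  have hW := WW_pos n
  have h2 : (3.1415:ℝ)^2 ≤ Real.pi ^ 2 := by gcongr
  have h4 : (3.1415:ℝ)^4 ≤ Real.pi ^ 4 := by gcongr
  have hC : CC n ≤ 1.134 := by
    have a1 : 5.25 / Real.pi ^ 2 / n ≤ 5.25 / 3.1415 ^ 2 / 5 := by gcongr
    have a2 : 66 / Real.pi ^ 4 / n ^ 2 ≤ 66 / 3.1415 ^ 4 / 5 ^ 2 := by gcongr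
    unfold CC
    norm_num at a1 a2 ⊢
    linarith
  have hC0 : 0 ≤ CC n := by unfold CC; positivity
  have hp : Real.pi ^ (-(11/4):ℝ) ≤ 0.043 := by
    apply rp_le _ _ hpi (by norm_num)
    have : (3.1415:ℝ)^11 ≤ Real.pi ^ 11 := by gcongr
    calc (1:ℝ) ≤ 0.043 ^ 4 * 3.1415 ^ 11 := by norm_num
      _ ≤ _ := by gcongr
  have hI : n * Im n (5/4) = ((n:ℝ)/2) ^ (-(1/8):ℝ) * Real.Gamma (9/8) := by
    rw [Im_val n (by omega) _ (by norm_num)]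
    rw [show -(5/4+1)/2 = (-(1/8):ℝ) + (-1) by norm_num, Real.rpow_add (by positivity), Real.rpow_neg_one,
      show ((5/4+1)/2:ℝ) = 9/8 by norm_num]
    field_simp
  have hWn : WW n * 0.817 ≤ ((n:ℝ)/2) ^ (-(1/8):ℝ) := by
    apply le_of_pow_le_pow_left₀ (n := 8) (by norm_num) (by positivity)
    rw [← Real.rpow_natCast (((n:ℝ)/2) ^ (-(1/8):ℝ)), ← Real.rpow_mul (by positivity)]
    norm_num
    rw [Real.rpow_neg_one, inv_div]
    have hw := WW_sq n hn
    have hw2 : (WW n ^ 2 * (n + 0.55)) ^ 4 ≤ 6.32 ^ 4 := by gcongr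
    rw [le_div_iff₀ (by positivity)]
    have hb : 0 < ((n:ℝ) + 0.55) ^ 4 := by positivity
    have hq : 6.32 ^ 4 * (817/1000) ^ 8 * (n:ℝ) ≤ 2 * ((n:ℝ) + 0.55) ^ 4 := by
      obtain ⟨t, ht0, ht⟩ : ∃ t, 0 ≤ t ∧ (n:ℝ) = 5 + t := ⟨n - 5, by linarith, by ring⟩
      rw [ht]
      norm_num
      nlinarith [pow_nonneg ht0 2, pow_nonneg ht0 3, pow_nonneg ht0 4]
    have : (WW n * (817/1000)) ^ 8 * n * ((n:ℝ) + 0.55) ^ 4 ≤ 2 * ((n:ℝ) + 0.55) ^ 4 := by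
      calc _ = (WW n ^ 2 * (n + 0.55)) ^ 4 * ((817/1000) ^ 8 * n) := by ring
        _ ≤ 6.32 ^ 4 * ((817/1000) ^ 8 * n) := by gcongr
        _ = 6.32 ^ 4 * (817/1000) ^ 8 * (n:ℝ) := by ring
        _ ≤ _ := hq
    exact le_of_mul_le_mul_right this hb
  rw [hI]
  have hG := Gamma_98
  calc WW n * CC n * Real.pi ^ (-(11/4):ℝ) * 1.265 ≤ WW n * 1.134 * 0.043 * 1.265 := by gcongr
    _ ≤ (WW n * 0.817) * 0.93 * 0.0812 := by nlinarith
    _ ≤ _ := by gcongr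

lemma Jn_gauss (n : ℕ) (hn : 5 ≤ n) (p : ℝ) (hp : 7/4 ≤ p) (hp2 : p < 2) :
    (n:ℝ) ^ (p/2) * gam p * kap p ≤ Jn n p := by
  have hn' : (5:ℝ) ≤ n := by exact_mod_cast hn
  have hpi := Real.pi_pos
  have hp0 : 0 < p := by linarith
  have hg := gauss_id p hp0 hp2 (Real.sqrt n) (by positivity)
  have hgi := gauss_integ p hp0 hp2 (Real.sqrt n)
  have e : Real.sqrt n ^ p = (n:ℝ) ^ (p/2) := by
    rw [Real.sqrt_eq_rpow, ← Real.rpow_mul (by positivity)]; congr 1; ring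
  have eu : ∀ u : ℝ, -(Real.sqrt n * u) ^ 2 / 2 = -n * u ^ 2 / 2 := by
    intro u; rw [mul_pow, Real.sq_sqrt (by positivity)]; ring
  rw [e] at hg
  simp only [eu] at hg hgi
  rw [← hg, Jn, ← sub_nonneg, ← integral_sub (Jn_integ n p hp0 hp2) hgi]
  set c : ℝ := (Real.pi/2) ^ (7/4 - p) with hc
  have hc0 : 0 < c := by positivity
  set R : ℝ → ℝ := (Ioi (Real.pi/2)).indicator (fun u => |Real.cos u| ^ n * u ^ (-(11/4):ℝ)) with hR
  have hRi : IntegrableOn R (Ioi 0) := by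
    have := (RR_integ n).integrable_indicator measurableSet_Ioi
    exact this.integrableOn
  have hRv : ∫ u in Ioi (0:ℝ), R u = ∫ u in Ioi (Real.pi/2), |Real.cos u| ^ n * u ^ (-(11/4):ℝ) := by
    rw [hR, setIntegral_indicator measurableSet_Ioi]
    congr 2
    ext x; simp only [mem_inter_iff, mem_Ioi]
    constructor
    · exact fun h => h.2
    · intro h; exact ⟨by linarith, h⟩
  have hQ := QQ_integ n (by omega)
  have h1 : 0 ≤ ∫ u in Ioi (0:ℝ), c * (QQ n u - R u) := by
    rw [integral_const_mul, integral_sub hQ hRi, hRv]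
    apply mul_nonneg hc0.le
    linarith [QQ_lower n hn, PL n hn, RR_bd n (by omega)]
  refine h1.trans ?_
  apply setIntegral_mono_on ((hQ.sub hRi).const_mul _) ((Jn_integ n p hp0 hp2).sub hgi) measurableSet_Ioi
  intro u hu
  have hu0 : (0:ℝ) < u := hu
  have hk : u ^ (-p-1) = u ^ (-(11/4):ℝ) * u ^ (7/4 - p) := by
    rw [← Real.rpow_add hu0]; congr 1; ring
  have hk0 : 0 < u ^ (-(11/4):ℝ) := by positivity
  have hk1 : 0 < u ^ (7/4 - p) := by positivity
  have hgp := Real.exp_pos (-n * u ^ 2 / 2)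
  simp only [Pi.sub_apply]
  rw [← sub_mul, hk]
  rw [show 1 - |Real.cos u| ^ n - (1 - Real.exp (-n * u ^ 2 / 2)) = Real.exp (-n * u ^ 2 / 2) - |Real.cos u| ^ n by ring]
  have hf0 : 0 ≤ |Real.cos u| ^ n := by positivity
  rcases le_or_gt u (Real.pi/2) with h | h
  · have hR0 : R u = 0 := by rw [hR]; apply indicator_of_notMem; simpa using h
    have hcu : c ≤ u ^ (7/4 - p) := Real.rpow_le_rpow_of_nonpos hu0 h (by linarith)
    have hs := pt_small n u ⟨hu0.le, h⟩
    have hpos : 0 ≤ Real.exp (-n * u ^ 2 / 2) - |Real.cos u| ^ n := by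
      have hcc : 0 ≤ Real.cos u := Real.cos_nonneg_of_mem_Icc ⟨by linarith, h⟩
      have h1 := pow_le_pow_left₀ hcc (cos_exp u ⟨hu0.le, h⟩) n
      rw [← Real.exp_nat_mul] at h1
      rw [abs_of_nonneg hcc, sub_nonneg]
      refine h1.trans (Real.exp_le_exp.2 ?_)
      have : 0 ≤ (n:ℝ) * (u ^ 4 / 12 + u ^ 6 / 45) := by positivity
      linarith
    rw [hR0, sub_zero]
    calc c * QQ n u = c * ((Real.exp (-n * u ^ 2 / 2) * (xx n u - xx n u ^ 2 / 2)) * u ^ (-(11/4):ℝ)) := by unfold QQ; ring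
      _ ≤ c * ((Real.exp (-n * u ^ 2 / 2) - |Real.cos u| ^ n) * u ^ (-(11/4):ℝ)) := by gcongr
      _ ≤ u ^ (7/4 - p) * ((Real.exp (-n * u ^ 2 / 2) - |Real.cos u| ^ n) * u ^ (-(11/4):ℝ)) := by gcongr
      _ = _ := by ring
  · have hR0 : R u = |Real.cos u| ^ n * u ^ (-(11/4):ℝ) := by rw [hR]; exact indicator_of_mem h _
    have hcu : u ^ (7/4 - p) ≤ c := Real.rpow_le_rpow_of_nonpos (by positivity) h.le (by linarith)
    have hs := pt_large n hn u h
    have hQ0 : QQ n u ≤ 0 := by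
      unfold QQ
      apply mul_nonpos_of_nonpos_of_nonneg _ hk0.le
      exact mul_nonpos_of_nonneg_of_nonpos hgp.le hs
    rw [hR0]
    calc c * (QQ n u - |Real.cos u| ^ n * u ^ (-(11/4):ℝ)) ≤ c * (0 - |Real.cos u| ^ n * u ^ (-(11/4):ℝ)) := by gcongr
      _ = -(c * (|Real.cos u| ^ n * u ^ (-(11/4):ℝ))) := by ring
      _ ≤ -(u ^ (7/4 - p) * (|Real.cos u| ^ n * u ^ (-(11/4):ℝ))) := by gcongr
      _ = (0 - |Real.cos u| ^ n) * (u ^ (-(11/4):ℝ) * u ^ (7/4 - p)) := by ring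
      _ ≤ _ := by gcongr


lemma sum_cons (n : ℕ) (F : (Fin (n+1) → Bool) → ℝ) :
    ∑ ε : Fin (n+1) → Bool, F ε = ∑ b : Bool, ∑ ε : Fin n → Bool, F (Fin.cons b ε) := by
  rw [← (Fin.consEquiv (fun _ : Fin (n+1) => Bool)).sum_comp, Fintype.sum_prod_type]
  rfl

lemma sum_sq (n : ℕ) : ∑ ε : Fin n → Bool, (∑ j, 1 * sg (ε j)) ^ 2 = n * 2 ^ n := by
  induction n with
  | zero => simp
  | succ n ih =>
    rw [sum_cons, Fintype.sum_bool, ← Finset.sum_add_distrib]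
    have : ∀ ε : Fin n → Bool, (∑ j : Fin (n+1), 1 * sg ((Fin.cons true ε : Fin (n+1) → Bool) j)) ^ 2 + (∑ j : Fin (n+1), 1 * sg ((Fin.cons false ε : Fin (n+1) → Bool) j)) ^ 2
      = 2 * (∑ j, 1 * sg (ε j)) ^ 2 + 2 := by
      intro ε
      rw [Fin.sum_univ_succ, Fin.sum_univ_succ]
      simp [sg]; ring
    simp only [this]
    rw [Finset.sum_add_distrib, ← Finset.mul_sum, ih]
    simp; ring

noncomputable def k1 (m : ℕ) (p : ℝ) : ℝ := kE m (fun _ => 1) p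

lemma lyap_pt (p : ℝ) (hp : p < 7/4) (c x n : ℝ) (hc : 0 < c) (hx : 0 ≤ x) (hn : 0 < n) :
    c * (x ^ (7/4:ℝ) / n ^ (7/8:ℝ)) ≤ ((1/4)/(2-p)) * c ^ (4*(2-p)) * (x ^ p / n ^ (p/2)) + (1 - (1/4)/(2-p)) * (x ^ 2 / n) := by
  have h2p : 0 < 2 - p := by linarith
  set θ : ℝ := (1/4)/(2-p) with hθ
  have hθ0 : 0 < θ := by positivity
  have hθ1 : θ < 1 := by rw [hθ, div_lt_one h2p]; linarith
  have h := Real.geom_mean_le_arith_mean2_weighted (w₁ := θ) (w₂ := 1 - θ) (p₁ := c ^ (4*(2-p)) * (x ^ p / n ^ (p/2))) (p₂ := x ^ 2 / n)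
    hθ0.le (by linarith) (by positivity) (by positivity) (by ring)
  have e1 : 4 * (2-p) * θ = 1 := by rw [hθ]; field_simp
  have e2 : p * θ + 2 * (1 - θ) = 7/4 := by rw [hθ]; field_simp; ring
  have key : c * (x ^ (7/4:ℝ) / n ^ (7/8:ℝ)) = (c ^ (4*(2-p)) * (x ^ p / n ^ (p/2))) ^ θ * (x ^ 2 / n) ^ (1 - θ) := by
    rw [Real.mul_rpow (by positivity) (by positivity), Real.div_rpow (by positivity) (by positivity), Real.div_rpow (by positivity) (by positivity),
      ← Real.rpow_mul hc.le, e1, Real.rpow_one, ← Real.rpow_mul hx, ← Real.rpow_mul hn.le, ← Real.rpow_natCast, ← Real.rpow_mul hx]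
    have f1 : x ^ (7/4:ℝ) = x ^ (p * θ) * x ^ (((2:ℕ):ℝ) * (1 - θ)) := by
      rw [← Real.rpow_add' hx (by push_cast; rw [e2]; norm_num)]
      congr 1; push_cast; rw [e2]
    have f2 : n ^ (7/8:ℝ) = n ^ (p/2 * θ) * n ^ (1 - θ) := by
      rw [← Real.rpow_add hn]; congr 1; linarith
    rw [f1, f2]; field_simp
  rw [key]; linarith

lemma lyap (m : ℕ) (p : ℝ) (hp : p < 7/4) (c n : ℝ) (hc : 0 < c) (hn : 0 < n) :
    c * (k1 m (7/4) / n ^ (7/8:ℝ)) ≤ ((1/4)/(2-p)) * c ^ (4*(2-p)) * (k1 m p / n ^ (p/2)) + (1 - (1/4)/(2-p)) * (m / n) := by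
  have h : ∑ ε : Fin m → Bool, c * (|∑ j, 1 * sg (ε j)| ^ (7/4:ℝ) / n ^ (7/8:ℝ)) ≤
     ∑ ε : Fin m → Bool, (((1/4)/(2-p)) * c ^ (4*(2-p)) * (|∑ j, 1 * sg (ε j)| ^ p / n ^ (p/2)) + (1 - (1/4)/(2-p)) * (|∑ j, 1 * sg (ε j)| ^ 2 / n)) :=
    Finset.sum_le_sum (fun ε _ => lyap_pt p hp c _ n hc (abs_nonneg _) hn)
  rw [← Finset.mul_sum, ← Finset.sum_div, Finset.sum_add_distrib, ← Finset.mul_sum, ← Finset.mul_sum, ← Finset.sum_div, ← Finset.sum_div] at h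
  simp only [sq_abs] at h
  rw [sum_sq] at h
  have h2 : (0:ℝ) < 2 ^ m := by positivity
  have h3 := div_le_div_of_nonneg_right h h2.le
  unfold k1 kE
  refine le_trans (le_of_eq ?_) (h3.trans (le_of_eq ?_))
  · ring
  · field_simp

lemma V_lower (n m1 m2 : ℕ) (hn : 0 < n) (h : m1 + m2 = 2 * n) (p : ℝ) (hp : p < 7/4)
    (hV : (2:ℝ) ^ (-(1/8):ℝ) * n ^ (7/8:ℝ) ≤ (k1 m1 (7/4) + k1 m2 (7/4)) / 2) :
    (2:ℝ) ^ (p/2-1) * n ^ (p/2) ≤ (k1 m1 p + k1 m2 p) / 2 := by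
  have hn' : (0:ℝ) < n := by exact_mod_cast hn
  have h2p : 0 < 2 - p := by linarith
  have a1 := lyap m1 p hp (2 ^ (1/8:ℝ)) n (by positivity) hn'
  have a2 := lyap m2 p hp (2 ^ (1/8:ℝ)) n (by positivity) hn'
  have hs : (m1:ℝ) + m2 = 2 * n := by exact_mod_cast h
  have hN : (0:ℝ) < (n:ℝ) ^ (7/8:ℝ) := by positivity
  have hM : (0:ℝ) < (n:ℝ) ^ (p/2) := by positivity
  have e0 : (2:ℝ) ^ (1/8:ℝ) * 2 ^ (-(1/8):ℝ) = 1 := by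
    rw [← Real.rpow_add (by norm_num)]; norm_num
  have e1 : ((2:ℝ) ^ (1/8:ℝ)) ^ (4*(2-p)) = 2 ^ (1 - p/2) := by
    rw [← Real.rpow_mul (by norm_num)]; congr 1; ring
  have e2 : (2:ℝ) ^ (1 - p/2) * 2 ^ (p/2 - 1) = 1 := by
    rw [← Real.rpow_add (by norm_num)]; norm_num
  rw [e1] at a1 a2
  have b1 : 1 ≤ (2:ℝ) ^ (1/8:ℝ) * (((k1 m1 (7/4) + k1 m2 (7/4)) / 2) / n ^ (7/8:ℝ)) := by
    refine e0.symm.le.trans ?_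
    exact mul_le_mul_of_nonneg_left ((le_div_iff₀ hN).2 hV) (by positivity)
  set θ : ℝ := (1/4)/(2-p) with hθ
  have hθ0 : 0 < θ := by positivity
  have b2 : 1 ≤ θ * 2 ^ (1 - p/2) * (((k1 m1 p + k1 m2 p) / 2) / n ^ (p/2)) + (1 - θ) := by
    have : (1 - θ) * ((m1:ℝ)/n) + (1 - θ) * ((m2:ℝ)/n) = (1 - θ) * 2 := by
      rw [← mul_add, ← add_div, hs]; field_simp
    have c1 : (2:ℝ) ^ (1/8:ℝ) * (((k1 m1 (7/4) + k1 m2 (7/4)) / 2) / n ^ (7/8:ℝ)) = (2 ^ (1/8:ℝ) * (k1 m1 (7/4) / n ^ (7/8:ℝ)) + 2 ^ (1/8:ℝ) * (k1 m2 (7/4) / n ^ (7/8:ℝ)))/2 := by ring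
    have c2 : θ * 2 ^ (1 - p/2) * (((k1 m1 p + k1 m2 p) / 2) / n ^ (p/2)) = (θ * 2 ^ (1 - p/2) * (k1 m1 p / n ^ (p/2)) + θ * 2 ^ (1 - p/2) * (k1 m2 p / n ^ (p/2)))/2 := by ring
    rw [c2]; rw [c1] at b1; linarith
  have b3 : 1 ≤ 2 ^ (1 - p/2) * (((k1 m1 p + k1 m2 p) / 2) / n ^ (p/2)) := by
    have : θ * 1 ≤ θ * (2 ^ (1 - p/2) * (((k1 m1 p + k1 m2 p) / 2) / n ^ (p/2))) := by linarith
    exact le_of_mul_le_mul_left this hθ0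
  rw [← le_div_iff₀ hM]
  have hz : (0:ℝ) < 2 ^ (p/2 - 1) := by positivity
  have := mul_le_mul_of_nonneg_left b3 hz.le
  rw [← mul_assoc, mul_comm (_ ^ (p/2-1)) (_ ^ (1 - p/2)), e2] at this
  linarith

lemma gam74 : 1.0012 * (2:ℝ) ^ (-(1/8):ℝ) ≤ gam (7/4) := by
  have h := rho_bd
  unfold gam
  rw [show ((7/4+1)/2:ℝ) = 11/8 by norm_num, show ((7/4)/2:ℝ) = -(1/8) + 1 by norm_num, Real.rpow_add (by norm_num), Real.rpow_one]
  have hs : 0 < Real.sqrt Real.pi := by positivity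
  have : 1.0012 / 2 ≤ Real.Gamma (11/8) / Real.sqrt Real.pi := by
    rw [le_div_iff₀ hs]; linarith
  have h2 : (0:ℝ) < 2 ^ (-(1/8):ℝ) := by positivity
  nlinarith

lemma k1_even (m : ℕ) (hm : 6 ≤ m) (he : Even m) : (m:ℝ) ^ (7/8:ℝ) * (1.0012 * (2:ℝ) ^ (-(1/8):ℝ)) ≤ k1 m (7/4) := by
  have h1 := Jn_gauss m (by omega) (7/4) le_rfl (by norm_num)
  rw [Jn_even m he _ (by norm_num) (by norm_num)] at h1
  have hk := kap_pos (7/4) (by norm_num) (by norm_num)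
  have h2 := le_of_mul_le_mul_right h1 hk
  rw [show ((7/4)/2:ℝ) = 7/8 by norm_num] at h2
  refine le_trans ?_ h2
  have := gam74
  gcongr

lemma rp_bounds (a b : ℝ) (k : ℕ) (s : ℝ) (ha : 0 < a) (hb : 0 ≤ b) (hs : s = k / 8) (h : b ^ 8 ≤ a ^ k) : b ≤ a ^ s := by
  apply le_of_pow_le_pow_left₀ (n := 8) (by norm_num) (by positivity)
  rw [← Real.rpow_natCast (a ^ s), ← Real.rpow_mul ha.le, hs]
  rw [show (k:ℝ)/8 * ((8:ℕ):ℝ) = k by push_cast; ring, Real.rpow_natCast]; exact h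

lemma rp_bounds' (a b : ℝ) (k : ℕ) (s : ℝ) (ha : 0 < a) (hb : 0 ≤ b) (hs : s = k / 8) (h : a ^ k ≤ b ^ 8) : a ^ s ≤ b := by
  apply le_of_pow_le_pow_left₀ (n := 8) (by norm_num) hb
  rw [← Real.rpow_natCast (a ^ s), ← Real.rpow_mul ha.le, hs]
  rw [show (k:ℝ)/8 * ((8:ℕ):ℝ) = k by push_cast; ring, Real.rpow_natCast]; exact h

lemma V5 : (2:ℝ) ^ (-(1/8):ℝ) * (5:ℕ) ^ (7/8:ℝ) ≤ (k1 4 (7/4) + k1 6 (7/4)) / 2 := by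
  have h6 := k1_even 6 le_rfl (by decide)
  have h4 : k1 4 (7/4) = 2 ^ (7/4:ℝ) / 2 + 4 ^ (7/4:ℝ) / 8 := by
    have h1 := Jn_four (7/4) (by norm_num) (by norm_num)
    rw [Jn_even 4 (by decide) _ (by norm_num) (by norm_num)] at h1
    exact mul_right_cancel₀ (kap_pos (7/4) (by norm_num) (by norm_num)).ne' h1
  have b1 : (3.36358:ℝ) ≤ 2 ^ (7/4:ℝ) := rp_bounds _ _ 14 _ (by norm_num) (by norm_num) (by norm_num) (by norm_num)
  have b2 : (11.3137:ℝ) ≤ 4 ^ (7/4:ℝ) := rp_bounds _ _ 14 _ (by norm_num) (by norm_num) (by norm_num) (by norm_num)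
  have b3 : (4.7960:ℝ) ≤ 6 ^ (7/8:ℝ) := rp_bounds _ _ 7 _ (by norm_num) (by norm_num) (by norm_num) (by norm_num)
  have b4 : (5:ℝ) ^ (7/8:ℝ) ≤ 4.08883 := rp_bounds' _ _ 7 _ (by norm_num) (by norm_num) (by norm_num) (by norm_num)
  have hv : (2:ℝ) ^ (-(1/8):ℝ) = (1/2:ℝ) ^ (1/8:ℝ) := by
    rw [Real.rpow_neg (by norm_num), one_div (2:ℝ), Real.inv_rpow (by norm_num)]
  have v1 : (0.917003:ℝ) ≤ 2 ^ (-(1/8):ℝ) := by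
    rw [hv]; exact rp_bounds _ _ 1 _ (by norm_num) (by norm_num) (by norm_num) (by norm_num)
  have v2 : (2:ℝ) ^ (-(1/8):ℝ) ≤ 0.917005 := by
    rw [hv]; exact rp_bounds' _ _ 1 _ (by norm_num) (by norm_num) (by norm_num) (by norm_num)
  push_cast at *
  rw [h4]
  set v := (2:ℝ) ^ (-(1/8):ℝ)
  have c1 : v * 5 ^ (7/8:ℝ) ≤ 0.917005 * 4.08883 := by gcongr
  have c2 : (4.7960:ℝ) * (1.0012 * 0.917003) ≤ 6 ^ (7/8:ℝ) * (1.0012 * v) := by gcongr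
  norm_num at *
  linarith

lemma concave_avg (t : ℝ) (h0 : 0 ≤ t) (h1 : t ≤ 1/7) : 1.99761 ≤ (1 - t) ^ (7/8:ℝ) + (1 + t) ^ (7/8:ℝ) := by
  have hc := (Real.concaveOn_rpow (p := 7/8) (by norm_num) (by norm_num)).2
  have a1 := hc (x := 6/7) (by simp; norm_num) (y := 8/7) (by simp; norm_num) (a := (1 - 7*t)/2) (b := (1 + 7*t)/2) (by linarith) (by linarith) (by ring)
  have a2 := hc (x := 6/7) (by simp; norm_num) (y := 8/7) (by simp; norm_num) (a := (1 + 7*t)/2) (b := (1 - 7*t)/2) (by linarith) (by linarith) (by ring)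
  simp only [smul_eq_mul] at a1 a2
  rw [show (1 - 7*t)/2 * (6/7) + (1 + 7*t)/2 * (8/7) = 1 + t by ring] at a1
  rw [show (1 + 7*t)/2 * (6/7) + (1 - 7*t)/2 * (8/7) = 1 - t by ring] at a2
  have b1 : (0.873815:ℝ) ≤ (6/7) ^ (7/8:ℝ) := rp_bounds _ _ 7 _ (by norm_num) (by norm_num) (by norm_num) (by norm_num)
  have b2 : (1.12393:ℝ) ≤ (8/7) ^ (7/8:ℝ) := rp_bounds _ _ 7 _ (by norm_num) (by norm_num) (by norm_num) (by norm_num)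
  linarith

lemma big_small_p (n : ℕ) (hn : 5 ≤ n) (p : ℝ) (hp0 : 0 < p) (hp : p < 7/4) :
    (2:ℝ) ^ (p/2-1) * n ^ (p/2) * kap p ≤ Jn n p := by
  have hp2 : p < 2 := by linarith
  have hk := kap_pos p hp0 hp2
  have hn' : (5:ℝ) ≤ n := by exact_mod_cast hn
  have main : ∀ m1 m2 : ℕ, Even m1 → Even m2 → m1 + m2 = 2 * n → 
     (2:ℝ) ^ (-(1/8):ℝ) * n ^ (7/8:ℝ) ≤ (k1 m1 (7/4) + k1 m2 (7/4)) / 2 → (2:ℝ) ^ (p/2-1) * n ^ (p/2) * kap p ≤ Jn n p := by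
    intro m1 m2 e1 e2 h hV
    have h1 := V_lower n m1 m2 (by omega) h p hp hV
    have h2 := Jn_mid n m1 m2 h p hp0 hp2
    rw [Jn_even m1 e1 p hp0 hp2, Jn_even m2 e2 p hp0 hp2] at h2
    refine le_trans ?_ h2
    have := mul_le_mul_of_nonneg_right h1 hk.le
    unfold k1 at this
    linarith
  have hv : (0:ℝ) < 2 ^ (-(1/8):ℝ) := by positivity
  rcases Nat.even_or_odd n with he | ho
  · apply main n n he he (by ring)
    have h6 : 6 ≤ n := by
      rcases hn.eq_or_lt with rfl | h
      · exact absurd he (by decide)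
      · exact h
    have := k1_even n h6 he
    have hN : (0:ℝ) < (n:ℝ) ^ (7/8:ℝ) := by positivity
    nlinarith [mul_pos hv hN]
  · rcases hn.eq_or_lt with rfl | h
    · exact main 4 6 (by decide) (by decide) (by norm_num) V5
    · have h7 : 7 ≤ n := by
        rcases ho with ⟨k, hk⟩; omega
      obtain ⟨m, rfl⟩ : ∃ m, n = m + 1 := ⟨n - 1, by omega⟩
      have hme : Even m := by rcases ho with ⟨k, hk⟩; exact ⟨k, by omega⟩
      apply main m (m + 2) hme (by rcases hme with ⟨k, hk⟩; exact ⟨k+1, by omega⟩) (by ring)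
      have g1 := k1_even m (by omega) hme
      have g2 := k1_even (m+2) (by omega) (by rcases hme with ⟨k, hk⟩; exact ⟨k+1, by omega⟩)
      set N : ℝ := ((m+1:ℕ):ℝ) with hN
      have hN7 : 7 ≤ N := by rw [hN]; exact_mod_cast h7
      have f1 : (m:ℝ) = N * (1 - 1/N) := by rw [hN]; push_cast; field_simp; ring
      have f2 : ((m+2:ℕ):ℝ) = N * (1 + 1/N) := by rw [hN]; push_cast; field_simp; ring
      have hi : 1 / N ≤ 1/7 := one_div_le_one_div_of_le (by norm_num) hN7
      have hi0 : 0 ≤ 1 / N := by positivity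
      have hc := concave_avg (1/N) hi0 hi
      rw [f1, Real.mul_rpow (by linarith) (by linarith)] at g1
      rw [f2, Real.mul_rpow (by linarith) (by linarith)] at g2
      have hNp : 0 < N ^ (7/8:ℝ) := by positivity
      have hq : (2:ℝ) * (2 ^ (-(1/8):ℝ) * N ^ (7/8:ℝ)) ≤ (2 ^ (-(1/8):ℝ) * N ^ (7/8:ℝ)) * 1.0012 * ((1 - 1/N) ^ (7/8:ℝ) + (1 + 1/N) ^ (7/8:ℝ)) := by
        have := mul_pos hv hNp
        nlinarith
      linarith


lemma n3_pt (p x R2 c l L3 : ℝ) (hp0 : 0 < p) (hR : 0 < R2) (hc : 0 < c) (hl : Real.log c ≤ l)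
    (hp2 : p < 2) (hL : Real.log R2 ≤ L3) :
    R2 ^ ((2 - p)/2) * (x ^ 2 * (1 - (2 - p)/2 * (x ^ 2 / c - 1 + l + L3))) ≤ |x| ^ p := by
  have hx0 := abs_nonneg x
  rw [← sq_abs x]
  rcases hx0.eq_or_lt with h | h
  · rw [← h]; simp [hp0.ne']
  · set y := |x|
    set θ := (2 - p)/2 with hθ
    have hθ0 : 0 < θ := by rw [hθ]; linarith
    have e1 : y ^ p = R2 ^ θ * (y ^ 2 * Real.exp (-θ * (Real.log (y ^ 2) + Real.log R2))) := by
      rw [show -θ * (Real.log (y ^ 2) + Real.log R2) = Real.log (y^2) * (-θ) + Real.log R2 * (-θ) by ring, Real.exp_add,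
        ← Real.rpow_def_of_pos (by positivity), ← Real.rpow_def_of_pos hR, Real.rpow_neg hR.le]
      have : y ^ 2 * (y ^ 2) ^ (-θ) = y ^ p := by
        rw [← Real.rpow_natCast, ← Real.rpow_mul h.le, ← Real.rpow_add h]
        congr 1; rw [hθ]; push_cast; ring
      rw [← this]; field_simp
    rw [e1]
    have hR' : 0 < R2 ^ θ := by positivity
    apply mul_le_mul_of_nonneg_left _ hR'.le
    apply mul_le_mul_of_nonneg_left _ (by positivity)
    have h1 := Real.add_one_le_exp (-θ * (Real.log (y ^ 2) + Real.log R2))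
    have h2 : Real.log (y^2) ≤ y^2/c - 1 + l := by
      have := Real.log_le_sub_one_of_pos (show 0 < y^2/c by positivity)
      rw [Real.log_div (by positivity) hc.ne'] at this
      linarith
    have h3 : θ * (Real.log (y ^ 2) + Real.log R2) ≤ θ * (y^2/c - 1 + l + L3) := by
      apply mul_le_mul_of_nonneg_left _ hθ0.le; linarith
    linarith

lemma n3_small (p x s : ℝ) (hp0 : 0 < p) (hp2 : p < 2) (hs : 0 < s) (hs6 : s ^ 2 ≤ 6) (hx : x ^ 2 ≤ s) :
    (s/6) ^ ((2 - p)/2) * x ^ 2 ≤ |x| ^ p := by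
  have hx0 := abs_nonneg x
  rw [← sq_abs x] at *
  rcases hx0.eq_or_lt with h | h
  · rw [← h]; simp [hp0.ne']
  · set y := |x|
    have h1 : (s/6) ^ ((2 - p)/2) * (y^2) ^ ((2-p)/2) ≤ 1 := by
      rw [← Real.mul_rpow (by positivity) (by positivity)]
      apply Real.rpow_le_one (by positivity) _ (by linarith)
      nlinarith
    have h2 : y ^ 2 = (y^2) ^ ((2-p)/2) * y ^ p := by
      rw [← Real.rpow_natCast, ← Real.rpow_mul h.le, ← Real.rpow_add h]
      congr 1; push_cast; ring
    rw [h2, ← mul_assoc]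
    have : 0 ≤ y ^ p := by positivity
    calc _ = (s/6) ^ ((2 - p)/2) * (y^2) ^ ((2-p)/2) * y ^ p := by ring
      _ ≤ 1 * y ^ p := by gcongr
      _ = _ := one_mul _

lemma n3_hyz (s t u v w : ℝ) (h1 : u+v+w = t) (h2 : u^2+v^2+w^2 = 4 - s) (hs : s = t^2) :
    u^4+v^4+w^4 ≤ (4-s)^2 - (2/3)*(s-2)^2 := by
  have e2 : u*v+v*w+w*u = s - 2 := by
    have : s = u^2+v^2+w^2 + 2*(u*v+v*w+w*u) := by rw [hs, ← h1]; ring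
    linarith
  rw [← e2, ← h2]
  linarith [sq_nonneg (u*v-v*w), sq_nonneg (v*w-w*u), sq_nonneg (w*u-u*v)]

set_option maxHeartbeats 1000000 in
lemma n3_norm (a b c p : ℝ) (ha : 0 ≤ a) (hb : 0 ≤ b) (hc : 0 ≤ c) (h : a^2+b^2+c^2 = 1) (hp1 : 1 ≤ p) (hp2 : p < 2) :
    (1/6:ℝ)^((2-p)/2) * (a^p+b^p+c^p) ≤ (|a+b+c|^p + |a+b-c|^p+|a-b+c|^p+|a-b-c|^p)/4 := by
  set s := (a+b+c)^2 with hs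
  have hs1 : 1 ≤ s := by rw [hs]; nlinarith [mul_nonneg ha hb, mul_nonneg ha hc, mul_nonneg hb hc]
  have hs3 : s ≤ 3 := by rw [hs]; nlinarith [sq_nonneg (a-b), sq_nonneg (a-c), sq_nonneg (b-c)]
  have hσ : 0 < a+b+c := by
    rcases (add_nonneg (add_nonneg ha hb) hc).eq_or_lt with h | h
    · rw [← h] at hs; norm_num at hs; linarith
    · exact h
  have step1 : a^p+b^p+c^p ≤ s ^ ((2-p)/2) := by
    have e : s ^ ((2-p)/2) = (a+b+c)^(2-p) := by
      rw [hs, ← Real.rpow_natCast, ← Real.rpow_mul hσ.le]; congr 1; push_cast; ring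
    have pt : ∀ t, 0 ≤ t → t ^ p ≤ (a+b+c)^(2-p) * ((2-p) * (t/(a+b+c)) + (p-1) * t^2) := by
      intro t ht
      have := Real.geom_mean_le_arith_mean2_weighted (w₁ := 2-p) (w₂ := p-1) (p₁ := t/(a+b+c)) (p₂ := t^2) (by linarith) (by linarith) (by positivity) (by positivity) (by ring)
      refine le_trans (le_of_eq ?_) (mul_le_mul_of_nonneg_left this (by positivity))
      rw [Real.div_rpow ht hσ.le, ← Real.rpow_natCast, ← Real.rpow_mul ht]
      have : t ^ p = t^(2-p) * t^(((2:ℕ):ℝ)*(p-1)) := by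
        rw [← Real.rpow_add' ht (by push_cast; linarith)]; congr 1; push_cast; ring
      rw [this]; field_simp
    have := add_le_add (add_le_add (pt a ha) (pt b hb)) (pt c hc)
    rw [e]
    refine this.trans (le_of_eq ?_)
    have f : (2-p) * (a/(a+b+c)) + (p-1) * a^2 + ((2-p) * (b/(a+b+c)) + (p-1) * b^2) + ((2-p) * (c/(a+b+c)) + (p-1) * c^2) = 1 := by
      have g : a/(a+b+c) + b/(a+b+c) + c/(a+b+c) = 1 := by field_simp
      linear_combination (2-p) * g + (p-1) * h
    linear_combination (a+b+c)^(2-p) * f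
  have step2 : (1/6:ℝ)^((2-p)/2) * (a^p+b^p+c^p) ≤ (s/6)^((2-p)/2) := by
    rw [show s/6 = 1/6 * s by ring, Real.mul_rpow (by norm_num) (by linarith)]
    gcongr
  refine step2.trans ?_
  have hq : (a+b+c)^2+(a+b-c)^2+(a-b+c)^2+(a-b-c)^2 = 4 := by linear_combination 4*h
  by_cases h6 : s^2 ≤ 6
  · have k1 := n3_small p (a+b+c) s (by linarith) hp2 (by linarith) h6 (le_of_eq hs.symm)
    have k2 := n3_small p (a+b-c) s (by linarith) hp2 (by linarith) h6 (by rw [hs]; nlinarith [mul_nonneg hb hc, mul_nonneg ha hc])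
    have k3 := n3_small p (a-b+c) s (by linarith) hp2 (by linarith) h6 (by rw [hs]; nlinarith [mul_nonneg hb hc, mul_nonneg ha hb])
    have k4 := n3_small p (a-b-c) s (by linarith) hp2 (by linarith) h6 (by rw [hs]; nlinarith [mul_nonneg ha hc, mul_nonneg ha hb])
    have : (s/6)^((2-p)/2) = ((s/6) ^ ((2 - p)/2) * (a+b+c) ^ 2 + (s/6) ^ ((2 - p)/2) * (a+b-c) ^ 2+(s/6) ^ ((2 - p)/2) * (a-b+c) ^ 2+(s/6) ^ ((2 - p)/2) * (a-b-c) ^ 2)/4 := by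
      linear_combination (-(1/4)) * (s/6) ^ ((2 - p)/2) * hq
    linarith
  · push Not at h6
    have hs24 : 2.44 ≤ s := by nlinarith
    have l2 := Real.log_two_lt_d9
    have l2' := Real.log_two_gt_d9
    have la : Real.log 2.8 ≤ 1.04 := by
      rw [show (2.8:ℝ) = 2 * 1.4 by norm_num, Real.log_mul (by norm_num) (by norm_num)]
      have : Real.log ((1.4:ℝ)^2) ≤ Real.log 2 := Real.log_le_log (by norm_num) (by norm_num)
      rw [Real.log_pow] at this; push_cast at this; linarith
    have lb : Real.log 0.8 ≤ -0.2079 := by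
      have : Real.log ((0.8:ℝ)^10) ≤ Real.log ((1/2)^3) := Real.log_le_log (by norm_num) (by norm_num)
      rw [Real.log_pow, Real.log_pow, one_div, Real.log_inv] at this; push_cast at this; linarith
    have hs28 : 0 < s/2.8 := div_pos (by linarith) (by norm_num)
    have lc : Real.log (s/6) ≤ s/2.8 - 1 - 0.7598 := by
      have h1 := Real.log_le_sub_one_of_pos hs28
      have h2 := Real.log_le_sub_one_of_pos (show (0:ℝ) < 14/15 by norm_num)
      rw [show s/6 = (s/2.8) * (14/15*(1/2)) by ring, Real.log_mul hs28.ne' (by norm_num), Real.log_mul (by norm_num) (by norm_num), one_div, Real.log_inv]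
      linarith
    have k1 := n3_pt p (a+b+c) (s/6) 2.8 1.04 _ (by linarith) (by linarith) (by norm_num) la hp2 lc
    have k2 := n3_pt p (a+b-c) (s/6) 0.8 (-0.2079) _ (by linarith) (by linarith) (by norm_num) lb hp2 lc
    have k3 := n3_pt p (a-b+c) (s/6) 0.8 (-0.2079) _ (by linarith) (by linarith) (by norm_num) lb hp2 lc
    have k4 := n3_pt p (a-b-c) (s/6) 0.8 (-0.2079) _ (by linarith) (by linarith) (by norm_num) lb hp2 lc
    rw [← hs] at k1
    set R := (s/6) ^ ((2 - p)/2) with hR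
    have hRp : 0 < R := by rw [hR]; apply Real.rpow_pos_of_pos; linarith
    have hq4 : (a+b-c)^4+(a-b+c)^4+(a-b-c)^4 ≤ (4-s)^2 - (2/3)*(s-2)^2 := by
      have := n3_hyz s (a+b+c) (a+b-c) (a-b+c) (-(a-b-c)) (by ring) (by rw [hs]; linarith) hs
      linarith [show (-(a-b-c))^4 = (a-b-c)^4 by ring]
    have hr : (a+b-c)^2+(a-b+c)^2+(a-b-c)^2 = 4 - s := by rw [hs]; linarith
    have br : s * (s/2.8-1+1.04) + ((a+b-c)^4+(a-b+c)^4+(a-b-c)^4)/0.8 + (4-s)*(-1-0.2079) + 4*(s/2.8 - 1 - 0.7598) ≤ 0 := by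
      have : ((a+b-c)^4+(a-b+c)^4+(a-b-c)^4)/0.8 ≤ ((4-s)^2 - (2/3)*(s-2)^2)/0.8 := by gcongr
      refine le_trans (add_le_add_left (add_le_add_left (add_le_add_right this _) _) _) ?_
      clear * - hs24 hs3
      have := mul_nonneg (sub_nonneg.2 hs24) (sub_nonneg.2 hs3)
      ring_nf at this ⊢
      linarith
    have tot : R * (4 - (2-p)/2 * (s * (s/2.8-1+1.04) + ((a+b-c)^4+(a-b+c)^4+(a-b-c)^4)/0.8 + (4-s)*(-1-0.2079) + 4*(s/2.8 - 1 - 0.7598)))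
       = R * (s * (1 - (2 - p) / 2 * (s / 2.8 - 1 + 1.04 + (s / 2.8 - 1 - 0.7598))))
       + R * ((a+b-c) ^ 2 * (1 - (2 - p)/2 * ((a+b-c) ^ 2 / 0.8 - 1 + -0.2079 + (s / 2.8 - 1 - 0.7598))))
       + R * ((a-b+c) ^ 2 * (1 - (2 - p)/2 * ((a-b+c) ^ 2 / 0.8 - 1 + -0.2079 + (s / 2.8 - 1 - 0.7598))))
       + R * ((a-b-c) ^ 2 * (1 - (2 - p)/2 * ((a-b-c) ^ 2 / 0.8 - 1 + -0.2079 + (s / 2.8 - 1 - 0.7598)))) := by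
      linear_combination (-R * (1 - (2-p)/2 * (- 1 + -0.2079 + (s / 2.8 - 1 - 0.7598)))) * hr
    have fin : R * 4 ≤ R * (4 - (2-p)/2 * (s * (s/2.8-1+1.04) + ((a+b-c)^4+(a-b+c)^4+(a-b-c)^4)/0.8 + (4-s)*(-1-0.2079) + 4*(s/2.8 - 1 - 0.7598))) := by
      apply mul_le_mul_of_nonneg_left _ hRp.le
      have := mul_nonneg (show 0 ≤ (2-p)/2 by linarith) (neg_nonneg.2 br)
      linarith
    linarith


noncomputable def F3 (a b c p : ℝ) : ℝ := (|a+b+c|^p + |a+b-c|^p+|a-b+c|^p+|a-b-c|^p)/4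

lemma kE3 (a : Fin 3 → ℝ) (p : ℝ) : kE 3 a p = F3 (a 0) (a 1) (a 2) p := by
  unfold kE F3
  rw [sum_cons]
  simp only [sum_cons, Fintype.sum_bool, Fin.sum_univ_three, Finset.univ_unique, Finset.sum_singleton]
  simp only [Fin.cons_zero, show (1 : Fin 3) = Fin.succ 0 from rfl, show (2 : Fin 3) = Fin.succ (Fin.succ 0) from rfl, Fin.cons_succ, sg]
  simp only [if_true, Bool.false_eq_true, if_false, mul_one, mul_neg]
  set x := a 0
  set y := a (Fin.succ 0)
  set z := a (Fin.succ (Fin.succ 0))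
  rw [← abs_neg (-x+y+z), ← abs_neg (-x+y+-z), ← abs_neg (-x+-y+z), ← abs_neg (-x+-y+-z)]
  rw [show -(-x+y+z) = x-y-z by ring, show -(-x+y+-z) = x-y+z by ring, show -(-x+-y+z) = x+y-z by ring, show -(-x+-y+-z) = x+y+z by ring,
    show x+y+-z = x+y-z by ring, show x+-y+z = x-y+z by ring, show x+-y+-z = x-y-z by ring]
  ring

lemma F3_n1 (a b c p : ℝ) : F3 |a| b c p = F3 a b c p := by
  rcases abs_choice a with h | h <;> rw [h]
  unfold F3
  rw [← abs_neg (-a+b+c), ← abs_neg (-a+b-c), ← abs_neg (-a-b+c), ← abs_neg (-a-b-c)]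
  rw [show -(-a+b+c) = a-b-c by ring, show -(-a+b-c) = a-b+c by ring, show -(-a-b+c) = a+b-c by ring, show -(-a-b-c) = a+b+c by ring]
  ring

lemma F3_n2 (a b c p : ℝ) : F3 a |b| c p = F3 a b c p := by
  rcases abs_choice b with h | h <;> rw [h]
  unfold F3
  rw [show a + -b+c = a-b+c by ring, show a + -b-c = a-b-c by ring, show a - -b+c = a+b+c by ring, show a - -b-c = a+b-c by ring]
  ring

lemma F3_n3 (a b c p : ℝ) : F3 a b |c| p = F3 a b c p := by
  rcases abs_choice c with h | h <;> rw [h]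
  unfold F3
  rw [show a + b+ -c = a+b-c by ring, show a + b- -c = a+b+c by ring, show a - b+ -c = a-b-c by ring, show a - b- -c = a-b+c by ring]
  ring

lemma F3_scale (t a b c p : ℝ) (ht : 0 ≤ t) : F3 (t*a) (t*b) (t*c) p = t^p * F3 a b c p := by
  unfold F3
  rw [show t*a+t*b+t*c = t*(a+b+c) by ring, show t*a+t*b-t*c = t*(a+b-c) by ring, show t*a-t*b+t*c = t*(a-b+c) by ring, show t*a-t*b-t*c = t*(a-b-c) by ring]
  simp only [abs_mul, abs_of_nonneg ht, Real.mul_rpow ht (abs_nonneg _)]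
  ring

lemma n3_gen (a b c p : ℝ) (ha : 0 ≤ a) (hb : 0 ≤ b) (hc : 0 ≤ c) (hp1 : 1 ≤ p) (hp2 : p < 2) :
    (1/6:ℝ)^((2-p)/2) * (a^p+b^p+c^p) ≤ F3 a b c p := by
  set t := Real.sqrt (a^2+b^2+c^2) with ht
  have ht2 : t^2 = a^2+b^2+c^2 := Real.sq_sqrt (by positivity)
  have ht0 : 0 ≤ t := Real.sqrt_nonneg _
  rcases ht0.eq_or_lt with h0 | h0
  · rw [← h0] at ht2
    have a0 : a = 0 := by nlinarith
    have b0 : b = 0 := by nlinarith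
    have c0 : c = 0 := by nlinarith
    subst a0 b0 c0
    simp [F3, Real.zero_rpow (show p ≠ 0 by linarith)]
  · have := n3_norm (a/t) (b/t) (c/t) p (by positivity) (by positivity) (by positivity) (by field_simp; linarith) hp1 hp2
    have e := F3_scale t (a/t) (b/t) (c/t) p ht0
    rw [mul_div_cancel₀ _ h0.ne', mul_div_cancel₀ _ h0.ne', mul_div_cancel₀ _ h0.ne'] at e
    rw [e]
    refine le_trans (le_of_eq ?_) (mul_le_mul_of_nonneg_left this (by positivity))
    rw [Real.div_rpow ha ht0, Real.div_rpow hb ht0, Real.div_rpow hc ht0]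
    field_simp

lemma kE3_ge (a : Fin 3 → ℝ) (p : ℝ) (hp1 : 1 ≤ p) (hp2 : p < 2) :
    (2:ℝ)^(p/2-1) * 3^(p/2-1) * ∑ j, |a j|^p ≤ kE 3 a p := by
  rw [kE3, ← F3_n1, ← F3_n2, ← F3_n3, Fin.sum_univ_three]
  refine le_trans (le_of_eq ?_) (n3_gen _ _ _ p (abs_nonneg _) (abs_nonneg _) (abs_nonneg _) hp1 hp2)
  congr 1
  rw [← Real.mul_rpow (by norm_num) (by norm_num), one_div, Real.inv_rpow (by norm_num), ← Real.rpow_neg (by norm_num)]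
  norm_num
  congr 1; ring

/-- per-power Khintchine constant -/
lemma kh_aux (r : ℝ) (hr1 : 1 ≤ r) (n : ℕ) (hn : 0 < n) (a : Fin n → ℝ) (hr2 : r < 2) :
    min (min 1 ((2:ℝ)^(r/2-1))) (gam r) * (n:ℝ)^(r/2-1) * ∑ j, |a j|^r ≤ kE n a r := by
  have hr0 : 0 < r := by linarith
  set M := min (min 1 ((2:ℝ)^(r/2-1))) (gam r) with hM
  have M1 : M ≤ 1 := (min_le_left _ _).trans (min_le_left _ _)
  have M2 : M ≤ (2:ℝ)^(r/2-1) := (min_le_left _ _).trans (min_le_right _ _)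
  have M3 : M ≤ gam r := min_le_right _ _
  have hS : 0 ≤ ∑ j, |a j|^r := Finset.sum_nonneg (fun j _ => by positivity)
  have hn' : (0:ℝ) < n := by exact_mod_cast hn
  have hk := kap_pos r hr0 hr2
  have main : M * (n:ℝ)^(r/2) * kap r ≤ Jn n r → M * (n:ℝ)^(r/2-1) * ∑ j, |a j|^r ≤ kE n a r := by
    intro h
    have h1 := kE_ge n hn a r hr0 hr2
    apply le_of_mul_le_mul_right _ hk
    refine le_trans ?_ h1
    rw [Real.rpow_sub_one hn'.ne']
    calc M * ((n:ℝ)^(r/2)/n) * (∑ j, |a j|^r) * kap r = (1/n * ∑ j, |a j|^r) * (M * (n:ℝ)^(r/2) * kap r) := by ring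
      _ ≤ _ := mul_le_mul_of_nonneg_left h (by positivity)
  have hz : (2:ℝ)^(r/2-1) * 2 = 2^(r/2) := by
    rw [Real.rpow_sub_one (by norm_num)]; ring
  have hzz : (2:ℝ)^(r/2) * 2^(r/2) = 2^r := by
    rw [← Real.rpow_add (by norm_num)]; congr 1; ring
  have h4 : (4:ℝ)^(r/2) = 2^r := by
    rw [show (4:ℝ) = 2*2 by norm_num, Real.mul_rpow (by norm_num) (by norm_num), hzz]
  have h4' : (4:ℝ)^r = 2^r * 2^r := by
    rw [show (4:ℝ) = 2*2 by norm_num, Real.mul_rpow (by norm_num) (by norm_num)]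
  by_cases n1 : n = 1
  · subst n1
    have : kE 1 a r = |a 0|^r := by
      unfold kE
      rw [sum_cons]
      simp [sg]
    rw [this]; simp
    have : 0 ≤ |a 0|^r := by positivity
    nlinarith
  by_cases n2 : n = 2
  · subst n2
    apply main
    rw [Jn_two r hr0]
    apply mul_le_mul_of_nonneg_right _ hk.le
    push_cast
    have : (0:ℝ) < 2^(r/2) := by positivity
    calc M * (2:ℝ)^(r/2) ≤ 2^(r/2-1) * 2^(r/2) := by gcongr
      _ = _ := by rw [← hzz, ← hz]; ring
  by_cases n3 : n = 3
  · subst n3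
    refine le_trans ?_ (kE3_ge a r hr1 hr2)
    push_cast
    gcongr
  by_cases n4 : n = 4
  · subst n4
    apply main
    rw [Jn_four r hr0 hr2]
    apply mul_le_mul_of_nonneg_right _ hk.le
    push_cast
    rw [h4, h4']
    have h2 : (0:ℝ) < 2^r := by positivity
    have : (2:ℝ)^(r/2-1) * 2^r ≤ 2^r/2 + 2^r*2^r/8 := by
      have : (2:ℝ)^(r/2-1) ≤ 1/2 + 2^r/8 := by
        rw [← hzz]; nlinarith [sq_nonneg ((2:ℝ)^(r/2) - 2)]
      nlinarith
    refine le_trans ?_ this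
    gcongr
  have n5 : 5 ≤ n := by omega
  apply main
  by_cases h74 : 7/4 ≤ r
  · refine le_trans ?_ (Jn_gauss n n5 r h74 hr2)
    rw [mul_comm M]; gcongr
  · push Not at h74
    refine le_trans ?_ (big_small_p n n5 r hr0 h74)
    gcongr

end Helpers

lemma khA_pos (r : ℝ) (hr : 0 < r) : 0 < khintchineA r := by
  have : 0 < Real.Gamma ((r+1)/2) := Real.Gamma_pos_of_pos (by linarith)
  unfold khintchineA
  refine lt_min (lt_min one_pos (by positivity)) (by positivity)

lemma kh (r : ℝ) (hr1 : 1 ≤ r) (hr2 : r < 2) (n : ℕ) (hn : 0 < n) (a : Fin n → ℝ) :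
    khintchineA r ^ r * (n:ℝ)^(r/2-1) * ∑ j, |a j|^r ≤ kE n a r := by
  have hr0 : 0 < r := by linarith
  refine le_trans ?_ (kh_aux r hr1 n hn a hr2)
  have hS : 0 ≤ ∑ j, |a j|^r := Finset.sum_nonneg (fun j _ => by positivity)
  have hA := khA_pos r hr0
  have hG : 0 < Real.Gamma ((r+1)/2) := Real.Gamma_pos_of_pos (by linarith)
  have A1 : khintchineA r ≤ 1 := (min_le_left _ _).trans (min_le_left _ _)
  have A2 : khintchineA r ≤ 2 ^ ((1 : ℝ) / 2 - 1 / r) := (min_le_left _ _).trans (min_le_right _ _)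
  have A3 : khintchineA r ≤ (2 ^ ((1 : ℝ) / 2) * (Real.Gamma ((r + 1) / 2) / Real.sqrt Real.pi) ^ (1 / r)) := min_le_right _ _
  have : khintchineA r ^ r ≤ min (min 1 ((2:ℝ)^(r/2-1))) (gam r) := by
    refine le_min (le_min (Real.rpow_le_one hA.le A1 hr0.le) ?_) ?_
    · refine (Real.rpow_le_rpow hA.le A2 hr0.le).trans (le_of_eq ?_)
      rw [← Real.rpow_mul (by norm_num)]; congr 1; field_simp
    · refine (Real.rpow_le_rpow hA.le A3 hr0.le).trans (le_of_eq ?_)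
      rw [Real.mul_rpow (by positivity) (by positivity), ← Real.rpow_mul (by norm_num), ← Real.rpow_mul (by positivity), gam,
        one_div_mul_cancel hr0.ne', Real.rpow_one]
      congr 2; ring
  gcongr

lemma fin_step (A r s γ X : ℝ) (n : ℕ) (hn : 0 < n) (hA : 0 < A) (hr : 0 < r) (hs : 0 < s)
    (hX : n * (1/r)^s ≤ X) (h : A^s * (n:ℝ)^(s/2-1) * X ≤ (n:ℝ)^(γ*s)) : A * (n:ℝ)^((1:ℝ)/2-γ) ≤ r := by
  have hn' : (0:ℝ) < n := by exact_mod_cast hn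
  have h1 : A^s * (n:ℝ)^(s/2-1) * (n * (1/r)^s) ≤ (n:ℝ)^(γ*s) := by
    refine le_trans ?_ h; gcongr
  have h2 : A^s * (n:ℝ)^(s/2-1) * (n * (1/r)^s) = (A * (n:ℝ)^((1:ℝ)/2) / r)^s := by
    rw [Real.div_rpow (x := A * (n:ℝ)^((1:ℝ)/2)) (by positivity) hr.le, Real.mul_rpow hA.le (by positivity), ← Real.rpow_mul hn'.le, Real.rpow_sub_one hn'.ne',
      Real.div_rpow (by norm_num) hr.le, Real.one_rpow, show 1/2*s = s/2 by ring]
    field_simp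
  rw [h2, Real.rpow_mul hn'.le, Real.rpow_le_rpow_iff (by positivity) (by positivity) hs, div_le_iff₀ hr] at h1
  rw [Real.rpow_sub hn', ← mul_div_assoc, div_le_iff₀ (by positivity)]
  linarith

lemma avg (n : ℕ) (M : Fin n → Fin n → ℝ) (p B : ℝ) 
    (h : ∀ ε : Fin n → Bool, ∑ i, |∑ j, M i j * sg (ε j)|^p ≤ B) : ∑ i, kE n (M i) p ≤ B := by
  unfold kE
  rw [← Finset.sum_div, Finset.sum_comm, div_le_iff₀ (by positivity)]
  refine (Finset.sum_le_sum (fun ε _ => h ε)).trans (le_of_eq ?_)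
  simp; ring

lemma bound_of (n : ℕ) (hn : 0 < n) (M : Fin n → Fin n → ℝ) (s γ r : ℝ) (hs1 : 1 ≤ s) (hs2 : s < 2) (hr : 0 < r)
    (h : ∀ ε : Fin n → Bool, ∑ i, |∑ j, M i j * sg (ε j)|^s ≤ (n:ℝ)^(γ*s)) 
    (hl : n * (1/r)^s ≤ ∑ i, ∑ j, |M i j|^s) : khintchineA s * (n:ℝ)^((1:ℝ)/2-γ) ≤ r := by
  apply fin_step _ r s γ _ n hn (khA_pos s (by linarith)) hr (by linarith) hl
  refine le_trans ?_ (avg n M s _ h)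
  rw [Finset.mul_sum]
  exact Finset.sum_le_sum (fun i _ => kh s hs1 hs2 n hn (M i))

lemma sg_abs (b : Bool) : |sg b| = 1 := by cases b <;> simp [sg]

lemma core (n : ℕ) (hn : 0 < n) (p : ℝ) (hp1 : 1 ≤ p) (hp2 : p < 2) (L : Set (Fin n → ℝ)) (β s : ℝ) (hs1 : 1 ≤ s) (hs2 : s < 2)
    (L1 : ∀ ε : Fin n → Bool, (fun j => (n:ℝ)^(-β) * sg (ε j)) ∈ L)
    (L2 : ∀ x ∈ L, ∀ i, |x i| ≤ 1)
    (L3 : ∀ x ∈ L, ∀ w : Fin n → ℝ, ∑ j, |w j| * |x j| ≤ (∑ j, |w j|^s)^(1/s))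
    (L4 : ∀ z : Fin n → ℝ, ∃ y ∈ L, ∑ j, z j * y j = (∑ j, |z j|^s)^(1/s))
    (r : ℝ) (hr : 0 < r) (T : (Fin n → ℝ) ≃ₗ[ℝ] (Fin n → ℝ))
    (h1 : L ⊆ T '' {x : Fin n → ℝ | ∑ i, |x i| ^ p ≤ 1}) (h2 : T '' {x : Fin n → ℝ | ∑ i, |x i| ^ p ≤ 1} ⊆ r • L) :
    khintchineA p * (n:ℝ)^((1:ℝ)/2-β) ≤ r ∧ khintchineA s * (n:ℝ)^(1/p-(1:ℝ)/2) ≤ r := by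
  have hp0 : 0 < p := by linarith
  have hs0 : 0 < s := by linarith
  have hn' : (0:ℝ) < n := by exact_mod_cast hn
  let S : Fin n → Fin n → ℝ := fun i j => T.symm (Pi.single j 1) i
  have hS : ∀ y i, T.symm y i = ∑ j, S i j * y j := by
    intro y i
    have := LinearMap.pi_apply_eq_sum_univ (T.symm : (Fin n → ℝ) →ₗ[ℝ] (Fin n → ℝ)) y
    have := congrFun this i
    simp only [LinearEquiv.coe_coe, Finset.sum_apply, Pi.smul_apply, smul_eq_mul] at this
    rw [this]
    refine Finset.sum_congr rfl (fun j _ => ?_)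
    rw [mul_comm]
    have : (fun k => if j = k then (1:ℝ) else 0) = Pi.single j 1 := by
      ext k; simp [Pi.single_apply, eq_comm]
    rw [this]
  have k1 : ∀ y ∈ L, ∑ i, |T.symm y i|^p ≤ 1 := by
    intro y hy
    obtain ⟨x, hx, rfl⟩ := h1 hy
    simpa using hx
  have k2 : ∀ x : Fin n → ℝ, ∑ i, |x i|^p ≤ 1 → ∃ l ∈ L, T x = r • l := by
    intro x hx
    obtain ⟨l, hl, e⟩ := h2 ⟨x, hx, rfl⟩
    exact ⟨l, hl, e.symm⟩
  constructor
  · apply bound_of n hn S p β r hp1 hp2 hr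
    · intro ε
      have := k1 _ (L1 ε)
      simp only [hS] at this
      have e : ∀ i, |∑ j, S i j * ((n:ℝ)^(-β) * sg (ε j))|^p = (n:ℝ)^(-(β*p)) * |∑ j, S i j * sg (ε j)|^p := by
        intro i
        have : ∑ j, S i j * ((n:ℝ)^(-β) * sg (ε j)) = (n:ℝ)^(-β) * ∑ j, S i j * sg (ε j) := by
          rw [Finset.mul_sum]; exact Finset.sum_congr rfl (fun j _ => by ring)
        rw [this, abs_mul, abs_of_pos (by positivity), Real.mul_rpow (by positivity) (by positivity), ← Real.rpow_mul hn'.le]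
        congr 2; ring
      simp only [e] at this
      rw [← Finset.mul_sum, Real.rpow_neg hn'.le, inv_mul_le_iff₀ (by positivity)] at this
      linarith
    · rw [Finset.sum_comm]
      have : ∀ j, (1/r)^p ≤ ∑ i, |S i j|^p := by
        intro j
        have hN0 : 0 ≤ ∑ i, |S i j|^p := Finset.sum_nonneg (fun i _ => by positivity)
        rcases hN0.eq_or_lt with h0 | h0
        · exfalso
          have hz : ∀ i, S i j = 0 := by
            intro i
            have := (Finset.sum_eq_zero_iff_of_nonneg (fun i _ => by positivity)).1 h0.symm i (Finset.mem_univ i)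
            rw [Real.rpow_eq_zero (abs_nonneg _) hp0.ne'] at this
            exact abs_eq_zero.1 this
          have : T.symm (Pi.single j 1) = 0 := funext hz
          rw [LinearEquiv.map_eq_zero_iff] at this
          have := congrFun this j
          simp at this
        · set N := ∑ i, |S i j|^p with hN
          set c := N^(1/p) with hc
          have hc0 : 0 < c := by positivity
          have hcp : c^p = N := by rw [hc, ← Real.rpow_mul hN0, one_div_mul_cancel hp0.ne', Real.rpow_one]
          obtain ⟨l, hl, e⟩ := k2 (c⁻¹ • T.symm (Pi.single j 1)) (by
            have : ∀ i, |(c⁻¹ • T.symm (Pi.single j 1)) i|^p = N⁻¹ * |S i j|^p := by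
              intro i
              rw [Pi.smul_apply, smul_eq_mul, abs_mul, abs_of_pos (by positivity), Real.mul_rpow (by positivity) (by positivity), Real.inv_rpow hc0.le, hcp]
            simp only [this]
            rw [← Finset.mul_sum, ← hN, inv_mul_cancel₀ h0.ne'])
          rw [map_smul, LinearEquiv.apply_symm_apply] at e
          have e' := congrFun e j
          simp at e'
          have hl1 := L2 l hl j
          have : c⁻¹ ≤ r := by
            rw [e']; have := le_abs_self (l j); nlinarith
          rw [← hcp]
          apply Real.rpow_le_rpow (by positivity) _ hp0.le
          rw [one_div]; exact inv_le_of_inv_le₀ hc0 this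
      refine le_trans (le_of_eq ?_) (Finset.sum_le_sum (fun j _ => this j))
      simp
  · rw [show 1/p - (1:ℝ)/2 = 1/2 - (1 - 1/p) by ring]
    apply bound_of n hn (fun j i => S i j) s (1-1/p) r hs1 hs2 hr
    · intro ε
      obtain ⟨y, hy, e⟩ := L4 (fun j => ∑ i, S i j * sg (ε i))
      have hk := k1 y hy
      have h3 : ∑ j, (∑ i, S i j * sg (ε i)) * y j = ∑ i, sg (ε i) * T.symm y i := by
        simp only [hS, Finset.sum_mul, Finset.mul_sum]
        rw [Finset.sum_comm]
        exact Finset.sum_congr rfl (fun i _ => Finset.sum_congr rfl (fun j _ => by ring))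
      have h4 : ∑ i, sg (ε i) * T.symm y i ≤ ∑ i, |T.symm y i| :=
        Finset.sum_le_sum (fun i _ => by
          refine (le_abs_self _).trans ?_
          rw [abs_mul, sg_abs, one_mul])
      have h5 : ∑ i, |T.symm y i| ≤ (n:ℝ)^(1-1/p) := by
        have := Real.rpow_sum_le_const_mul_sum_rpow Finset.univ (T.symm y) hp1
        rw [Finset.card_univ, Fintype.card_fin] at this
        have hz : (∑ i, |T.symm y i|)^p ≤ ((n:ℝ)^(1-1/p))^p := by
          rw [← Real.rpow_mul hn'.le, show (1-1/p)*p = p - 1 by field_simp]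
          refine this.trans (mul_le_of_le_one_right (by positivity) hk)
        exact (Real.rpow_le_rpow_iff (Finset.sum_nonneg (fun i _ => abs_nonneg _)) (by positivity) hp0).1 hz
      rw [h3] at e
      have h6 := e.symm.le.trans (h4.trans h5)
      have hW : 0 ≤ ∑ j, |∑ i, S i j * sg (ε i)|^s := Finset.sum_nonneg (fun i _ => by positivity)
      have h7 := Real.rpow_le_rpow (by positivity) h6 hs0.le
      rwa [← Real.rpow_mul hW, one_div_mul_cancel hs0.ne', Real.rpow_one, ← Real.rpow_mul hn'.le] at h7
    · rw [Finset.sum_comm]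
      have : ∀ i, (1/r)^s ≤ ∑ j, |S i j|^s := by
        intro i
        obtain ⟨l, hl, e⟩ := k2 (Pi.single i 1) (by
          rw [Finset.sum_eq_single i]
          · simp
          · intro b _ hb; simp [hb, hp0.ne']
          · simp)
        have e2 : T.symm (T (Pi.single i 1)) i = 1 := by simp
        rw [e, hS] at e2
        have h3 := L3 l hl (S i)
        have hW : 0 ≤ ∑ j, |S i j|^s := Finset.sum_nonneg (fun i _ => by positivity)
        have h4 : (1:ℝ) ≤ r * ∑ j, |S i j| * |l j| := by
          rw [← e2, Finset.mul_sum]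
          refine Finset.sum_le_sum (fun j _ => ?_)
          rw [← abs_mul]
          have := mul_le_mul_of_nonneg_left (le_abs_self (S i j * l j)) hr.le
          simp only [Pi.smul_apply, smul_eq_mul]
          linarith
        have h5 : 1/r ≤ (∑ j, |S i j|^s)^(1/s) := by
          rw [div_le_iff₀ hr]; nlinarith
        have h7 := Real.rpow_le_rpow (by positivity) h5 hs0.le
        rwa [← Real.rpow_mul hW, one_div_mul_cancel hs0.ne', Real.rpow_one] at h7
      refine le_trans (le_of_eq ?_) (Finset.sum_le_sum (fun j _ => this j))
      simp

lemma main_of (n : ℕ) (hn : 0 < n) (p : ℝ) (hp1 : 1 ≤ p) (hp2 : p < 2) (L : Set (Fin n → ℝ)) (β s : ℝ) (hs1 : 1 ≤ s) (hs2 : s < 2)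
    (L1 : ∀ ε : Fin n → Bool, (fun j => (n:ℝ)^(-β) * sg (ε j)) ∈ L)
    (L2 : ∀ x ∈ L, ∀ i, |x i| ≤ 1)
    (L3 : ∀ x ∈ L, ∀ w : Fin n → ℝ, ∑ j, |w j| * |x j| ≤ (∑ j, |w j|^s)^(1/s))
    (L4 : ∀ z : Fin n → ℝ, ∃ y ∈ L, ∑ j, z j * y j = (∑ j, |z j|^s)^(1/s))
    (L5 : ∀ x : Fin n → ℝ, (∀ i, |x i| ≤ 1/n) → x ∈ L) :
    max (khintchineA p * (n:ℝ)^((1:ℝ)/2-β)) (khintchineA s * (n:ℝ)^(1/p-(1:ℝ)/2)) ≤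
      bmDist n {x : Fin n → ℝ | ∑ i, |x i| ^ p ≤ 1} L := by
  have hp0 : 0 < p := by linarith
  have hn' : (0:ℝ) < n := by exact_mod_cast hn
  have hn1 : (1:ℝ) ≤ n := by exact_mod_cast hn
  unfold bmDist
  apply le_csInf
  · refine ⟨(n:ℝ)^2, one_le_pow₀ hn1, LinearEquiv.smulOfNeZero ℝ (Fin n → ℝ) (n:ℝ) hn'.ne', ?_, ?_⟩
    · intro x hx
      refine ⟨(n:ℝ)⁻¹ • x, ?_, ?_⟩
      · show ∑ i, |((n:ℝ)⁻¹ • x) i|^p ≤ 1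
        have : ∀ i, |((n:ℝ)⁻¹ • x) i|^p ≤ (n:ℝ)⁻¹ := by
          intro i
          have h1 : |((n:ℝ)⁻¹ • x) i| ≤ (n:ℝ)⁻¹ := by
            rw [Pi.smul_apply, smul_eq_mul, abs_mul, abs_of_pos (by positivity)]
            exact mul_le_of_le_one_right (by positivity) (L2 x hx i)
          have h2 : |((n:ℝ)⁻¹ • x) i| ≤ 1 := h1.trans (inv_le_one_of_one_le₀ hn1)
          exact (Real.rpow_le_self_of_le_one (abs_nonneg _) h2 hp1).trans h1
        refine (Finset.sum_le_sum (fun i _ => this i)).trans ?_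
        simp [hn'.ne']
      · simp [hn'.ne']
    · rintro _ ⟨x, hx, rfl⟩
      have hx : ∑ i, |x i|^p ≤ 1 := hx
      refine ⟨(n:ℝ)⁻¹ • x, L5 _ ?_, ?_⟩
      · intro i
        rw [Pi.smul_apply, smul_eq_mul, abs_mul, abs_of_pos (by positivity), one_div]
        refine mul_le_of_le_one_right (by positivity) ?_
        have h1 : |x i|^p ≤ 1 := (Finset.single_le_sum (f := fun i => |x i|^p) (fun i _ => by positivity) (Finset.mem_univ i)).trans hx
        by_contra hc
        push Not at hc
        have := Real.one_lt_rpow hc hp0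
        linarith
      · simp only [LinearEquiv.smulOfNeZero_apply, smul_smul]
        congr 1; field_simp
  · rintro r ⟨hr, T, h1, h2⟩
    have := core n hn p hp1 hp2 L β s hs1 hs2 L1 L2 L3 L4 r (by linarith) T h1 h2
    exact max_le this.1 this.2

lemma dual_vec (n : ℕ) (Q s : ℝ) (h : s.HolderConjugate Q) (z : Fin n → ℝ) :
    ∃ y : Fin n → ℝ, ∑ i, |y i|^Q ≤ 1 ∧ ∑ j, z j * y j = (∑ j, |z j|^s)^(1/s) := by
  have hs0 : 0 < s := h.pos
  have hQ0 : 0 < Q := h.symm.pos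
  have hs1 : 1 < s := h.lt
  have hW0 : 0 ≤ ∑ j, |z j|^s := Finset.sum_nonneg (fun i _ => by positivity)
  rcases hW0.eq_or_lt with h0 | h0
  · refine ⟨0, by simp [hQ0.ne'], ?_⟩
    rw [← h0]; simp [hs0.ne']
  set W := ∑ j, |z j|^s with hW
  have hc : 1/Q = 1 - 1/s := by
    have := h.inv_add_inv_eq_one
    rw [one_div, one_div]; linarith
  refine ⟨fun j => SignType.sign (z j) * |z j|^(s-1) * W^(-(1/Q)), ?_, ?_⟩
  · have : ∀ j, |(SignType.sign (z j) : ℝ) * |z j|^(s-1) * W^(-(1/Q))|^Q ≤ |z j|^s * W⁻¹ := by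
      intro j
      rw [abs_mul, abs_mul, abs_of_pos (show 0 < W^(-(1/Q)) by positivity), abs_of_nonneg (show 0 ≤ |z j|^(s-1) by positivity),
        Real.mul_rpow (by positivity) (by positivity), Real.mul_rpow (by positivity) (by positivity), ← Real.rpow_mul (abs_nonneg _), ← Real.rpow_mul h0.le,
        show -(1/Q)*Q = -1 by field_simp, Real.rpow_neg_one, show (s-1)*Q = s by
          have := h.sub_one_mul_conj; linarith]
      gcongr
      refine mul_le_of_le_one_left (by positivity) (Real.rpow_le_one (abs_nonneg _) ?_ hQ0.le)
      rcases lt_trichotomy (z j) 0 with h | h | h <;> simp [h]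
    refine (Finset.sum_le_sum (fun i _ => this i)).trans ?_
    rw [← Finset.sum_mul, ← hW, mul_inv_cancel₀ h0.ne']
  · have : ∀ j, z j * (SignType.sign (z j) * |z j|^(s-1) * W^(-(1/Q))) = |z j|^s * W^(-(1/Q)) := by
      intro j
      rw [← mul_assoc, ← mul_assoc, mul_comm (z j), sign_mul_self]
      congr 1
      rw [← Real.rpow_one_add' (abs_nonneg _) (by linarith)]; congr 1; ring
    simp only [this]
    rw [← Finset.sum_mul, ← hW, hc, ← Real.rpow_one_add' h0.le (by
      rw [show 1 + -(1 - 1/s) = 1/s by ring]; positivity)]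
    congr 1; ring

theorem stmt19 (n : ℕ) (hn : 0 < n) (p : ℝ) (hp1 : 1 ≤ p) (hp2 : p < 2)
    (q : ℝ≥0∞) (hq : 2 < q) (qstar : ℝ) (hqstar : 1 / qstar = 1 - (1 / q).toReal) :
    max (khintchineA p * (n : ℝ) ^ ((1 : ℝ) / 2 - (1 / q).toReal))
        (khintchineA qstar * (n : ℝ) ^ (1 / p - (1 : ℝ) / 2)) ≤
      bmDist n {x : Fin n → ℝ | ∑ i, |x i| ^ p ≤ 1}
        (if q = ∞ then {x : Fin n → ℝ | ∀ i, |x i| ≤ 1}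
          else {x : Fin n → ℝ | ∑ i, |x i| ^ q.toReal ≤ 1}) := by
  have hn' : (0:ℝ) < n := by exact_mod_cast hn
  have hn1 : (1:ℝ) ≤ n := by exact_mod_cast hn
  by_cases hqi : q = ∞
  · subst hqi
    rw [if_pos rfl]
    have hs : qstar = 1 := by
      simp at hqstar; exact hqstar
    subst hs
    apply main_of n hn p hp1 hp2 _ _ _ le_rfl (by norm_num)
    · intro ε i
      simp [sg_abs]
    · intro x hx; exact hx
    · intro x hx w
      simp only [Real.rpow_one, div_one]
      exact Finset.sum_le_sum (fun j _ => mul_le_of_le_one_right (abs_nonneg _) (hx j))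
    · intro z
      refine ⟨fun j => SignType.sign (z j), ?_, ?_⟩
      · intro j
        rcases lt_trichotomy (z j) 0 with h | h | h <;> simp [h]
      · simp
    · intro x hx i
      refine (hx i).trans ?_
      rw [div_le_one hn']; exact hn1
  · rw [if_neg hqi]
    set Q := q.toReal with hQ
    have hQ2 : 2 < Q := by
      have := (ENNReal.toReal_lt_toReal (by norm_num) hqi).2 hq
      simpa using this
    have hb : (1/q).toReal = 1/Q := by rw [ENNReal.toReal_div]; simp [hQ]
    rw [hb] at hqstar ⊢
    have hQ0 : 0 < Q := by linarith
    have hs : qstar = Q/(Q-1) := by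
      have : (1 - 1/Q) = (Q-1)/Q := by field_simp
      rw [this] at hqstar
      rw [← inv_inv qstar, ← one_div qstar, hqstar, inv_div]
    have hs1 : 1 < qstar := by rw [hs, one_lt_div (by linarith)]; linarith
    have hs2 : qstar < 2 := by rw [hs, div_lt_iff₀ (by linarith)]; linarith
    have hc : qstar.HolderConjugate Q := by
      rw [Real.holderConjugate_iff]
      refine ⟨hs1, ?_⟩
      rw [one_div, one_div] at hqstar; linarith
    apply main_of n hn p hp1 hp2 _ _ _ hs1.le hs2
    · intro ε
      show ∑ i, |(n:ℝ)^(-(1/Q)) * sg (ε i)|^Q ≤ 1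
      have : ∀ i, |(n:ℝ)^(-(1/Q)) * sg (ε i)|^Q = (n:ℝ)⁻¹ := by
        intro i
        rw [abs_mul, sg_abs, mul_one, abs_of_pos (by positivity), ← Real.rpow_mul hn'.le, show -(1/Q)*Q = -1 by field_simp, Real.rpow_neg_one]
      simp only [this]
      simp [hn'.ne']
    · intro x hx i
      have h1 : |x i|^Q ≤ 1 := (Finset.single_le_sum (f := fun i => |x i|^Q) (fun i _ => by positivity) (Finset.mem_univ i)).trans hx
      by_contra hc
      push Not at hc
      have := Real.one_lt_rpow hc hQ0
      linarith
    · intro x hx w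
      have := Real.inner_le_Lp_mul_Lq Finset.univ (fun j => |w j|) (fun j => |x j|) hc
      simp only [abs_abs] at this
      refine this.trans (mul_le_of_le_one_right ?_ ?_)
      · exact Real.rpow_nonneg (Finset.sum_nonneg (fun i _ => by positivity)) _
      · exact Real.rpow_le_one (Finset.sum_nonneg (fun i _ => by positivity)) hx (by positivity)
    · intro z
      obtain ⟨y, h1, h2⟩ := dual_vec n Q qstar hc z
      exact ⟨y, h1, h2⟩
    · intro x hx
      show ∑ i, |x i|^Q ≤ 1
      have : ∀ i, |x i|^Q ≤ (n:ℝ)⁻¹ := by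
        intro i
        have h1 := hx i
        rw [one_div] at h1
        exact (Real.rpow_le_self_of_le_one (abs_nonneg _) (h1.trans (inv_le_one_of_one_le₀ hn1)) (by linarith)).trans h1
      refine (Finset.sum_le_sum (fun i _ => this i)).trans ?_
      simp [hn'.ne']
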